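/- Under the stated assumptions including non-periodicity, for every even integer k ≥ 0, (1/A(N)) Σ_{1≤n≤N} b_k(n) ∼ (k!/(2^{k/2} (k/2)!)) σ^{k} (log N)^{k/2} as N → ∞. -/

import Mathlib

open scoped BigOperators ENNReal
open Filter Asymptotics

noncomputable section

/-- `af P m n` is the number of ordered `m`-tuples `(n₁,…,n_m)` of elements of `P`
with product `n` (so `af P 0 n = 1` iff `n = 1`). -/
def af (P : Set ℕ) (m n : ℕ) : ℕ :=
  Nat.card {t : Fin m → ℕ // (∀ i, t i ∈ P) ∧ ∏ i, t i = n}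

/-- `aTot P n = a(n) = Σ_{m ≥ 0} a_m(n)`. -/
def aTot (P : Set ℕ) (n : ℕ) : ℝ := ∑' m : ℕ, (af P m n : ℝ)

/-- `Acum P N = A(N) = Σ_{1 ≤ n ≤ N} a(n)`. -/
def Acum (P : Set ℕ) (N : ℕ) : ℝ := ∑ n ∈ Finset.Icc 1 N, aTot P n

/-- The Dirichlet series `𝒫(x) = Σ_{n ∈ 𝒫} n^{-x}` at a real point. -/
def Pval (P : Set ℕ) (x : ℝ) : ℝ := ∑' n : P, ((n : ℕ) : ℝ) ^ (-x)

/-- `𝒫'(x) = -Σ_{n ∈ 𝒫} n^{-x} log n`. -/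
def Pderiv1 (P : Set ℕ) (x : ℝ) : ℝ := -∑' n : P, ((n : ℕ) : ℝ) ^ (-x) * Real.log (n : ℕ)

/-- `𝒫''(x) = Σ_{n ∈ 𝒫} n^{-x} (log n)^2`. -/
def Pderiv2 (P : Set ℕ) (x : ℝ) : ℝ := ∑' n : P, ((n : ℕ) : ℝ) ^ (-x) * (Real.log (n : ℕ)) ^ 2

/-- The abscissa of convergence `κ` of the Dirichlet series of `P`, as an extended real
(`⊥` when `P` is finite). -/
def kappa (P : Set ℕ) : EReal :=
  sInf {x : EReal | ∃ r : ℝ, x = (r : EReal) ∧ Summable (fun n : P => ((n : ℕ) : ℝ) ^ (-r))}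

open Classical in
/-- The (possibly infinite) value `𝒫(x) ∈ (0,∞]` of the Dirichlet series at an
extended-real point; at `x = -∞` every term `n^{-x}` is infinite. -/
def PvalE (P : Set ℕ) (x : EReal) : ℝ≥0∞ :=
  if x = ⊥ then ⊤ else ∑' n : P, ENNReal.ofReal (((n : ℕ) : ℝ) ^ (-x.toReal))

/-- `b_k(n) = Σ_{m ≥ 0} a_m(n) (m - μ log n)^k`. -/
def bCoef (P : Set ℕ) (μ : ℝ) (k n : ℕ) : ℝ :=
  ∑' m : ℕ, (af P m n : ℝ) * ((m : ℝ) - μ * Real.log n) ^ k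


section Taub
open MeasureTheory Set Topology

def fphi (t : ℝ) : ℝ := max 0 (1 - |t|)
def fK (y : ℝ) : ℝ := if y = 0 then 1 else 2 * (1 - Real.cos y) / y ^ 2

lemma fphi_cont : Continuous fphi := by unfold fphi; fun_prop

lemma fphi_nonneg (t : ℝ) : 0 ≤ fphi t := le_max_left _ _

lemma fphi_le (t : ℝ) : fphi t ≤ 1 := by
  unfold fphi; have := abs_nonneg t; simp

lemma fphi_zero {t : ℝ} (h : 1 ≤ |t|) : fphi t = 0 := by
  unfold fphi; simp; linarith

lemma fphi_cs : HasCompactSupport fphi := by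
  apply HasCompactSupport.intro (isCompact_Icc (a := (-1:ℝ)) (b := 1))
  intro x hx
  apply fphi_zero
  by_contra h
  push Not at h
  rw [abs_lt] at h
  exact hx ⟨h.1.le, h.2.le⟩

lemma fphi_int : Integrable fphi := fphi_cont.integrable_of_hasCompactSupport fphi_cs

lemma fK_nonneg (y : ℝ) : 0 ≤ fK y := by
  unfold fK; split_ifs
  · norm_num
  · have := Real.cos_le_one y; apply div_nonneg <;> nlinarith [sq_nonneg y]

lemma fK_le (y : ℝ) : fK y ≤ 5 * (1 + y ^ 2)⁻¹ := by
  unfold fK; split_ifs with h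
  · simp [h]
  · have h1 := Real.one_sub_sq_div_two_le_cos (x := y)
    have h2 := Real.neg_one_le_cos y
    have h3 : 0 < y ^ 2 := by positivity
    rw [← div_eq_mul_inv, div_le_div_iff₀ h3 (by positivity)]
    nlinarith

lemma fK_meas : Measurable fK := by
  unfold fK
  apply Measurable.ite (measurableSet_singleton 0) <;> fun_prop

lemma fK_int : Integrable fK := by
  apply (integrable_inv_one_add_sq.const_mul 5).mono' fK_meas.aestronglyMeasurable
  filter_upwards with y
  rw [Real.norm_of_nonneg (fK_nonneg y)]; exact fK_le y

lemma fK_pos : 0 < ∫ y, fK y := by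
  rw [integral_pos_iff_support_of_nonneg fK_nonneg fK_int]
  refine lt_of_lt_of_le ?_ (measure_mono (s := Ioo (0:ℝ) 1) ?_)
  · simp
  · intro y hy
    simp only [Function.mem_support, fK, hy.1.ne', if_false]
    have : Real.cos y < 1 := by
      have := Real.cos_lt_cos_of_nonneg_of_le_pi_div_two (x := 0) (y := y) le_rfl (by linarith [Real.pi_gt_three, hy.2]) hy.1
      simpa using this
    have h2 := hy.1
    have : 0 < 1 - Real.cos y := by linarith
    positivity

lemma fK_four (y : ℝ) : ∫ t, (fphi t : ℂ) * Complex.exp (Complex.I * y * t) = fK y := by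
  have h0 : ∫ t, (fphi t : ℂ) * Complex.exp (Complex.I * y * t)
      = ∫ t in (-1:ℝ)..1, (fphi t : ℂ) * Complex.exp (Complex.I * y * t) := by
    rw [intervalIntegral.integral_of_le (by norm_num), setIntegral_eq_integral_of_forall_compl_eq_zero]
    intro x hx
    rw [fphi_zero]; simp
    by_contra h
    push Not at h
    rw [abs_lt] at h
    exact hx ⟨h.1, h.2.le⟩
  have hc : Continuous fun t : ℝ => (fphi t : ℂ) * Complex.exp (Complex.I * y * t) := by
    have := fphi_cont
    fun_prop
  rw [h0, ← intervalIntegral.integral_add_adjacent_intervals (b := 0) (hc.intervalIntegrable _ _) (hc.intervalIntegrable _ _)]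
  have e1 : ∫ t in (-1:ℝ)..0, (fphi t : ℂ) * Complex.exp (Complex.I * y * t)
     = ∫ t in (-1:ℝ)..0, (1 + t : ℂ) * Complex.exp (Complex.I * y * t) := by
    apply intervalIntegral.integral_congr
    intro t ht
    rw [uIcc_of_le (by norm_num)] at ht
    have : fphi t = 1 + t := by
      unfold fphi; rw [abs_of_nonpos ht.2, max_eq_right] <;> linarith [ht.1]
    simp [this]
  have e2 : ∫ t in (0:ℝ)..1, (fphi t : ℂ) * Complex.exp (Complex.I * y * t)
     = ∫ t in (0:ℝ)..1, (1 - t : ℂ) * Complex.exp (Complex.I * y * t) := by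
    apply intervalIntegral.integral_congr
    intro t ht
    rw [uIcc_of_le (by norm_num)] at ht
    have : fphi t = 1 - t := by
      unfold fphi; rw [abs_of_nonneg ht.1, max_eq_right]; linarith [ht.2]
    simp [this]
  rw [e1, e2]
  by_cases hy : y = 0
  · subst hy
    have i1 : ∫ t in (-1:ℝ)..0, (1 + t : ℂ) = 1/2 := by
      have : ∫ t in (-1:ℝ)..0, (1 + t : ℝ) = 1/2 := by
        rw [intervalIntegral.integral_add] <;> simp; norm_num
      rw [show (1/2:ℂ) = ((1/2:ℝ):ℂ) by norm_num, ← this, ← intervalIntegral.integral_ofReal]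
      simp
    have i2 : ∫ t in (0:ℝ)..1, (1 - t : ℂ) = 1/2 := by
      have : ∫ t in (0:ℝ)..1, (1 - t : ℝ) = 1/2 := by
        rw [intervalIntegral.integral_sub] <;> simp; norm_num
      rw [show (1/2:ℂ) = ((1/2:ℝ):ℂ) by norm_num, ← this, ← intervalIntegral.integral_ofReal]
      simp
    simp [fK]
    rw [i1, i2]; norm_num
  · set a : ℂ := Complex.I * y with ha
    have ha0 : a ≠ 0 := by simp [ha, hy]
    have d0 : ∀ t : ℝ, HasDerivAt (fun t : ℝ => Complex.exp (a * t)) (a * Complex.exp (a * t)) t := by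
      intro t
      have h1 : HasDerivAt (fun t : ℝ => a * (t:ℂ)) a t := by
        simpa using (Complex.ofRealCLM.hasDerivAt (x := t)).const_mul a
      have := h1.cexp
      rwa [mul_comm] at this
    have dt : ∀ t : ℝ, HasDerivAt (fun t : ℝ => (t:ℂ)) 1 t := fun t => by
      simpa using (hasDerivAt_id t).ofReal_comp
    have d1 : ∀ t : ℝ, HasDerivAt (fun t : ℝ => ((1 + t) / a - 1 / a ^ 2) * Complex.exp (a * t)) ((1 + t : ℂ) * Complex.exp (a * t)) t := by
      intro t
      refine HasDerivAt.congr_deriv ((((dt t).const_add 1).div_const a).sub_const (1 / a ^ 2) |>.mul (d0 t)) ?_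
      field_simp; ring
    have d2 : ∀ t : ℝ, HasDerivAt (fun t : ℝ => ((1 - t) / a + 1 / a ^ 2) * Complex.exp (a * t)) ((1 - t : ℂ) * Complex.exp (a * t)) t := by
      intro t
      refine HasDerivAt.congr_deriv ((((dt t).const_sub 1).div_const a).add_const (1 / a ^ 2) |>.mul (d0 t)) ?_
      field_simp; ring
    rw [intervalIntegral.integral_eq_sub_of_hasDerivAt (fun t _ => d1 t)
        (Continuous.intervalIntegrable (by fun_prop) _ _),
      intervalIntegral.integral_eq_sub_of_hasDerivAt (fun t _ => d2 t)
        (Continuous.intervalIntegrable (by fun_prop) _ _)]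
    simp only [fK, hy, if_false]
    have hc : Complex.exp a + Complex.exp (-a) = 2 * (Real.cos y : ℂ) := by
      rw [Complex.ofReal_cos, Complex.cos, ha]; ring_nf
    have hy2 : (y : ℂ) ≠ 0 := by exact_mod_cast hy
    have ha2 : a ^ 2 = - (y:ℂ) ^ 2 := by rw [ha, mul_pow, Complex.I_sq]; ring
    have : Complex.exp a = 2 * (Real.cos y : ℂ) - Complex.exp (-a) := by rw [← hc]; ring
    push_cast
    simp only [mul_zero, Complex.exp_zero, mul_one, mul_neg, this, ha2]
    push_cast
    field_simp
    ring

lemma four_fubini (D : ℝ → ℝ) (ε l T : ℝ)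
    (hD : IntegrableOn (fun x => D x * Real.exp (-(ε * x))) (Ioi 0)) :
    ((∫ x in Ioi (0:ℝ), D x * Real.exp (-(ε * x)) * fK (l * (T - x)) : ℝ) : ℂ)
    = ∫ u, (fphi u : ℂ) * Complex.exp (Complex.I * (l * T) * u) *
        ∫ x in Ioi (0:ℝ), (D x : ℂ) * Complex.exp (-((ε + Complex.I * (l * u)) * x)) := by
  rw [← integral_complex_ofReal]
  have e1 : ∀ x : ℝ, ((D x * Real.exp (-(ε * x)) * fK (l * (T - x)) : ℝ) : ℂ)
     = ∫ u, (D x * Real.exp (-(ε * x)) : ℝ) * ((fphi u : ℂ) * Complex.exp (Complex.I * (l * (T - x) : ℝ) * u)) := by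
    intro x
    rw [integral_const_mul, fK_four]; push_cast; ring
  simp_rw [e1]
  rw [integral_integral_swap]
  · congr 1; ext u
    rw [← integral_const_mul]
    congr 1; ext x
    push_cast
    rw [show -((ε + Complex.I * (l * u)) * (x:ℂ)) = -(ε * x) + -(Complex.I * l * u * x) by ring,
      show Complex.I * (l * (T - x)) * (u:ℂ) = Complex.I * (l * T) * u + -(Complex.I * l * u * x) by ring,
      Complex.exp_add, Complex.exp_add]
    ring
  · have := (hD.ofReal (𝕜 := ℂ)).mul_prod (fphi_int.ofReal (𝕜 := ℂ))
    have h2 := this.bdd_mul (c := 1) (f := fun z : ℝ × ℝ => Complex.exp (Complex.I * (l * (T - z.1) : ℝ) * z.2)) (by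
      apply Continuous.aestronglyMeasurable; fun_prop) (by
      filter_upwards with z
      rw [show Complex.I * (l * (T - z.1) : ℝ) * z.2 = ((l * (T - z.1) * z.2 : ℝ) : ℂ) * Complex.I by push_cast; ring,
        Complex.norm_exp_ofReal_mul_I])
    refine h2.congr ?_
    filter_upwards with z
    simp [Function.uncurry]
    ring
end Taub

section Taub2
open MeasureTheory Set Topology

lemma osc_aux (H : ℂ → ℂ) (hH : Continuous H) (l : ℝ) (hl : 0 < l) (p : ℕ) :
    Tendsto (fun T : ℝ => ∫ u, (fphi u : ℂ) * Complex.exp (Complex.I * (l * T) * u) *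
      (H ((1 / T : ℝ) + Complex.I * (l * u)) / (1 + Complex.I * (T * (l * u))) ^ p)) atTop (𝓝 0) := by
  obtain ⟨M, hM⟩ : ∃ M : ℝ, ∀ a ∈ Icc (0:ℝ) 1, ∀ u ∈ Icc (-1:ℝ) 1, ‖H (a + Complex.I * (l * u))‖ ≤ M := by
    have := ((isCompact_Icc (a := (0:ℝ)) (b := 1)).prod (isCompact_Icc (a := (-1:ℝ)) (b := 1))).exists_bound_of_continuousOn
      (f := fun z : ℝ × ℝ => H (z.1 + Complex.I * (l * z.2))) (by fun_prop)
    obtain ⟨M, hM⟩ := this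
    exact ⟨M, fun a ha u hu => hM (a, u) ⟨ha, hu⟩⟩
  have hexp : ∀ T u : ℝ, ‖Complex.exp (Complex.I * (l * T) * u)‖ = 1 := by
    intro T u
    rw [show Complex.I * (l * T) * u = ((l * T * u : ℝ) : ℂ) * Complex.I by push_cast; ring,
        Complex.norm_exp_ofReal_mul_I]
  have hM' : ∀ a ∈ Icc (0:ℝ) 1, ∀ u, fphi u * ‖H (a + Complex.I * (l * u))‖ ≤ M * fphi u := by
    intro a ha u
    by_cases hu : |u| ≤ 1
    · rw [mul_comm]
      exact mul_le_mul_of_nonneg_right (hM a ha u (abs_le.mp hu)) (fphi_nonneg u)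
    · rw [fphi_zero (by linarith)]; simp
  have hden : ∀ T u : ℝ, 1 ≤ ‖1 + Complex.I * (T * (l * u))‖ := by
    intro T u
    have := Complex.abs_re_le_norm (1 + Complex.I * (T * (l * u)))
    simpa using this
  have hT1 : ∀ᶠ T : ℝ in atTop, (1 / T : ℝ) ∈ Icc (0:ℝ) 1 := by
    filter_upwards [eventually_ge_atTop 1] with T hT
    exact ⟨by positivity, by rw [div_le_one (by linarith)]; exact hT⟩
  have htz : Tendsto (fun T : ℝ => ((1 / T : ℝ) : ℂ)) atTop (𝓝 0) := by
    have := tendsto_inv_atTop_zero (𝕜 := ℝ)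
    simp_rw [← one_div] at this
    exact (Complex.continuous_ofReal.tendsto' 0 0 (by simp)).comp this
  have hpc := fphi_cont
  have hmeas : ∀ T : ℝ, ∀ p : ℕ, AEStronglyMeasurable (fun u : ℝ => (fphi u : ℂ) * Complex.exp (Complex.I * (l * T) * u) *
      (H ((1 / T : ℝ) + Complex.I * (l * u)) / (1 + Complex.I * (T * (l * u))) ^ p)) volume := by
    intro T p
    apply Continuous.aestronglyMeasurable
    refine Continuous.mul (by fun_prop) (Continuous.div (by fun_prop) (by fun_prop) ?_)
    intro u h
    have h1 := hden T u
    rcases Nat.eq_zero_or_pos p with rfl | hp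
    · simp at h
    · rw [pow_eq_zero_iff hp.ne'] at h
      rw [h] at h1; norm_num at h1
  have hbd : ∀ p : ℕ, ∀ T : ℝ, (1 / T : ℝ) ∈ Icc (0:ℝ) 1 → ∀ u : ℝ, ‖(fphi u : ℂ) * Complex.exp (Complex.I * (l * T) * u) *
      (H ((1 / T : ℝ) + Complex.I * (l * u)) / (1 + Complex.I * (T * (l * u))) ^ p)‖ ≤ M * fphi u := by
    intro p T hT u
    rw [norm_mul, norm_mul, hexp, norm_div, norm_pow, Complex.norm_real, Real.norm_of_nonneg (fphi_nonneg u), mul_one]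
    refine le_trans ?_ (hM' _ hT u)
    apply mul_le_mul_of_nonneg_left _ (fphi_nonneg u)
    exact div_le_self (norm_nonneg _) (one_le_pow₀ (hden T u))
  rcases Nat.eq_zero_or_pos p with rfl | hp
  · -- p = 0
    have RL : Tendsto (fun T : ℝ => ∫ u, (fphi u : ℂ) * Complex.exp (Complex.I * (l * T) * u) *
      (H (Complex.I * (l * u)))) atTop (𝓝 0) := by
      have h1 := Real.tendsto_integral_exp_smul_cocompact (fun u : ℝ => (fphi u : ℂ) * H (Complex.I * (l * u)))
      have h2 : Tendsto (fun T : ℝ => (-(l / (2 * Real.pi))) * T) atTop (cocompact ℝ) := by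
        refine Tendsto.mono_right ?_ atBot_le_cocompact
        apply Tendsto.const_mul_atTop_of_neg _ tendsto_id
        have := Real.pi_pos
        simp; positivity
      refine (h1.comp h2).congr ?_
      intro T
      simp only [Function.comp]
      congr 1; ext u
      rw [Circle.smul_def, Real.fourierChar_apply]
      rw [smul_eq_mul]
      have : (2 * Real.pi * -(u * (-(l / (2 * Real.pi)) * T)) : ℝ) = l * T * u := by
        have := Real.pi_pos.ne'
        field_simp
      rw [this, show Complex.I * (l * T) * u = ((l * T * u : ℝ) : ℂ) * Complex.I by push_cast; ring]
      ring
    have DC : Tendsto (fun T : ℝ => ∫ u, ((fphi u : ℂ) * Complex.exp (Complex.I * (l * T) * u) *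
      (H ((1 / T : ℝ) + Complex.I * (l * u))) - (fphi u : ℂ) * Complex.exp (Complex.I * (l * T) * u) *
      (H (Complex.I * (l * u))))) atTop (𝓝 (∫ u : ℝ, (0:ℂ))) := by
      apply tendsto_integral_filter_of_dominated_convergence (fun u => 2 * (M * fphi u))
      · filter_upwards with T
        apply Continuous.aestronglyMeasurable; fun_prop
      · filter_upwards [hT1] with T hT
        filter_upwards with u
        refine (norm_sub_le _ _).trans ?_
        rw [two_mul]
        apply add_le_add
        · simpa using hbd 0 T hT u
        · rw [norm_mul, norm_mul, hexp, Complex.norm_real, Real.norm_of_nonneg (fphi_nonneg u), mul_one]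
          simpa using hM' 0 (by simp) u
      · exact (fphi_int.const_mul M).const_mul 2
      · filter_upwards with u
        rw [tendsto_zero_iff_norm_tendsto_zero]
        have : Tendsto (fun T : ℝ => ‖(fphi u : ℂ)‖ * ‖H ((1 / T : ℝ) + Complex.I * (l * u)) - H (Complex.I * (l * u))‖) atTop (𝓝 0) := by
          have h1 : Tendsto (fun T : ℝ => H ((1 / T : ℝ) + Complex.I * (l * u))) atTop (𝓝 (H (Complex.I * (l * u)))) := by
            apply (hH.tendsto _).comp
            simpa using htz.add_const (Complex.I * (l * u))
          have h2 := ((h1.sub_const (H (Complex.I * (l * u)))).norm).const_mul ‖(fphi u : ℂ)‖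
          simpa using h2
        refine this.congr ?_
        intro T
        rw [← mul_sub, norm_mul, norm_mul, hexp, mul_one]
    have := DC.add RL
    simp only [integral_zero, add_zero] at this
    refine this.congr' ?_
    filter_upwards [hT1] with T hT
    rw [← integral_add]
    · congr 1; ext u; simp
    · have hint : Continuous fun u : ℝ => ((fphi u : ℂ) * Complex.exp (Complex.I * (l * T) * u) *
        (H ((1 / T : ℝ) + Complex.I * (l * u))) - (fphi u : ℂ) * Complex.exp (Complex.I * (l * T) * u) *
        (H (Complex.I * (l * u)))) := by fun_prop
      apply hint.integrable_of_hasCompactSupport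
      apply fphi_cs.mono
      intro u hu
      simp only [Function.mem_support] at hu ⊢
      intro h; rw [h] at hu; simp at hu
    · have hint : Continuous fun u : ℝ => ((fphi u : ℂ) * Complex.exp (Complex.I * (l * T) * u) *
        (H (Complex.I * (l * u)))) := by fun_prop
      apply hint.integrable_of_hasCompactSupport
      apply fphi_cs.mono
      intro u hu
      simp only [Function.mem_support] at hu ⊢
      intro h; rw [h] at hu; simp at hu
  · have : Tendsto (fun T : ℝ => ∫ u, (fphi u : ℂ) * Complex.exp (Complex.I * (l * T) * u) *
      (H ((1 / T : ℝ) + Complex.I * (l * u)) / (1 + Complex.I * (T * (l * u))) ^ p)) atTop (𝓝 (∫ u : ℝ, (0:ℂ))) := by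
      apply tendsto_integral_filter_of_dominated_convergence (fun u => M * fphi u)
      · filter_upwards with T
        exact hmeas T p
      · filter_upwards [hT1] with T hT
        filter_upwards with u
        exact hbd p T hT u
      · exact (fphi_int.const_mul M)
      · have : ∀ᵐ u : ℝ, u ≠ 0 := by
          simp [ae_iff]
        filter_upwards [this] with u hu
        rw [tendsto_zero_iff_norm_tendsto_zero]
        have hb : Tendsto (fun T : ℝ => M * fphi u * (l * |u|)⁻¹ * T⁻¹) atTop (𝓝 0) := by
          simpa using tendsto_inv_atTop_zero.const_mul (M * fphi u * (l * |u|)⁻¹)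
        refine squeeze_zero' (Eventually.of_forall fun _ => norm_nonneg _) ?_ hb
        filter_upwards [hT1, eventually_gt_atTop 0] with T hT hT0
        rw [norm_mul, norm_mul, hexp, norm_div, norm_pow, Complex.norm_real, Real.norm_of_nonneg (fphi_nonneg u), mul_one]
        have h1 : T * (l * |u|) ≤ ‖1 + Complex.I * (T * (l * u))‖ ^ p := by
          have := Complex.abs_im_le_norm (1 + Complex.I * (T * (l * u)))
          simp [abs_mul, abs_of_pos hT0, abs_of_pos hl] at this
          refine this.trans (le_self_pow₀ (hden T u) hp.ne')
        have hu' : 0 < |u| := abs_pos.mpr hu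
        have h2 : 0 < T * (l * |u|) := by positivity
        calc fphi u * (‖H ((1 / T : ℝ) + Complex.I * (l * u))‖ / ‖1 + Complex.I * (T * (l * u))‖ ^ p)
            = (fphi u * ‖H ((1 / T : ℝ) + Complex.I * (l * u))‖) / ‖1 + Complex.I * (T * (l * u))‖ ^ p := by ring
          _ ≤ (fphi u * ‖H ((1 / T : ℝ) + Complex.I * (l * u))‖) / (T * (l * |u|)) := by
              apply div_le_div_of_nonneg_left _ h2 h1
              exact mul_nonneg (fphi_nonneg u) (norm_nonneg _)
          _ ≤ M * fphi u / (T * (l * |u|)) := by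
              exact div_le_div_of_nonneg_right (hM' _ hT u) h2.le
          _ = M * fphi u * (l * |u|)⁻¹ * T⁻¹ := by
              rw [div_eq_mul_inv, mul_inv]; ring
    simpa using this

lemma main_lim (l : ℝ) (hl : 0 < l) (p : ℕ) :
    Tendsto (fun T : ℝ => (∫ x in Ioi (0:ℝ), x ^ p * Real.exp (-(1 / T * x)) * fK (l * (T - x))) / T ^ p) atTop
      (𝓝 (Real.exp (-1) * ∫ y, fK (l * y))) := by
  have hint : Integrable fun y => fK (l * y) := fK_int.comp_mul_left' hl.ne'
  have h1 : Tendsto (fun T : ℝ => ∫ y, (Iio T).indicator (fun y => ((T - y) / T) ^ p * Real.exp (-((T - y) / T)) * fK (l * y)) y) atTop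
     (𝓝 (∫ y, Real.exp (-1) * fK (l * y))) := by
    apply tendsto_integral_filter_of_dominated_convergence (fun y => (p.factorial : ℝ) * fK (l * y))
    · filter_upwards with T
      apply AEStronglyMeasurable.indicator _ measurableSet_Iio
      apply Measurable.aestronglyMeasurable
      have := fK_meas
      fun_prop
    · filter_upwards [eventually_gt_atTop 0] with T hT
      filter_upwards with y
      by_cases hy : y < T
      · rw [indicator_of_mem (by exact hy)]
        have h0 : 0 ≤ (T - y) / T := div_nonneg (by linarith) hT.le
        have hk := fK_nonneg (l * y)
        rw [Real.norm_of_nonneg (by positivity)]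
        apply mul_le_mul_of_nonneg_right _ hk
        have := Real.pow_div_factorial_le_exp _ h0 p
        rw [div_le_iff₀ (by positivity)] at this
        rw [Real.exp_neg, ← div_eq_mul_inv, div_le_iff₀ (Real.exp_pos _)]
        linarith
      · rw [indicator_of_notMem (by exact hy)]
        have hk := fK_nonneg (l * y)
        simp; positivity
    · exact hint.const_mul _
    · filter_upwards with y
      have hq : Tendsto (fun T : ℝ => (T - y) / T) atTop (𝓝 1) := by
        have : Tendsto (fun T : ℝ => 1 - y * T⁻¹) atTop (𝓝 (1 - y * 0)) :=
          tendsto_const_nhds.sub (tendsto_inv_atTop_zero.const_mul y)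
        simp only [mul_zero, sub_zero] at this
        refine this.congr' ?_
        filter_upwards [eventually_gt_atTop 0] with T hT
        field_simp
      have : Tendsto (fun T : ℝ => ((T - y) / T) ^ p * Real.exp (-((T - y) / T)) * fK (l * y)) atTop (𝓝 (1 ^ p * Real.exp (-1) * fK (l * y))) := by
        exact ((hq.pow p).mul ((Real.continuous_exp.tendsto _).comp hq.neg)).mul_const _
      rw [one_pow, one_mul] at this
      refine this.congr' ?_
      filter_upwards [eventually_gt_atTop y] with T hT
      rw [indicator_of_mem (by exact hT)]
  rw [integral_const_mul] at h1
  refine h1.congr' ?_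
  filter_upwards [eventually_gt_atTop 0] with T hT
  rw [← integral_div, ← integral_indicator measurableSet_Ioi,
    ← integral_sub_left_eq_self _ volume T]
  congr 1; ext y
  by_cases hy : 0 < y
  · rw [indicator_of_mem (by simpa using hy), indicator_of_mem (by simpa using hy)]
    rw [sub_sub_cancel, div_pow, show -(1 / T * y) = -(y / T) by ring]
    ring
  · rw [indicator_of_notMem (by simpa using hy), indicator_of_notMem (by simpa using hy)]
end Taub2

section Taub3
open MeasureTheory Set Topology

lemma pow_exp_int (p : ℕ) (ε : ℝ) (hε : 0 < ε) :
    IntegrableOn (fun x : ℝ => x ^ p * Real.exp (-(ε * x))) (Ioi 0) := by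
  have := integrableOn_rpow_mul_exp_neg_mul_rpow (p := 1) (s := p) (b := ε) (by
    have : (0:ℝ) ≤ p := by positivity
    linarith) one_pos hε
  simpa [Real.rpow_natCast] using this

lemma norm_exp_neg_mul (z : ℂ) (x : ℝ) : ‖Complex.exp (-(z * x))‖ = Real.exp (-(z.re * x)) := by
  rw [Complex.norm_exp]; simp

lemma pow_cexp_int (p : ℕ) (z : ℂ) (hz : 0 < z.re) :
    IntegrableOn (fun x : ℝ => (x : ℂ) ^ p * Complex.exp (-(z * x))) (Ioi 0) := by
  apply (pow_exp_int p z.re hz).mono'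
  · apply Continuous.aestronglyMeasurable; fun_prop
  · filter_upwards [ae_restrict_mem measurableSet_Ioi] with x hx
    rw [norm_mul, norm_exp_neg_mul, norm_pow, Complex.norm_real, Real.norm_of_nonneg (le_of_lt hx)]

lemma pow_laplace (p : ℕ) (z : ℂ) (hz : 0 < z.re) :
    ∫ x in Ioi (0:ℝ), (x : ℂ) ^ p * Complex.exp (-(z * x)) = p.factorial / z ^ (p + 1) := by
  have hz0 : z ≠ 0 := by rintro rfl; simp at hz
  induction p with
  | zero =>
    have := integral_exp_mul_complex_Ioi (a := -z) (by simpa using hz) 0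
    simp at this
    simp [this]
  | succ p ih =>
    have hder : ∀ x ∈ Ici (0:ℝ), HasDerivAt (fun x : ℝ => (x:ℂ) ^ (p+1) * Complex.exp (-(z * x)))
        ((p+1) * ((x:ℂ) ^ p * Complex.exp (-(z * x))) - z * ((x:ℂ)^(p+1) * Complex.exp (-(z * x)))) x := by
      intro x _
      have h1 : HasDerivAt (fun x : ℝ => (x:ℂ)) 1 x := by simpa using (hasDerivAt_id x).ofReal_comp
      have h2 : HasDerivAt (fun x : ℝ => -(z * (x:ℂ))) (-z) x := ((h1.const_mul z).fun_neg).congr_deriv (by ring)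
      refine HasDerivAt.congr_deriv ((h1.pow (p+1)).mul h2.cexp) ?_
      simp; ring
    have hi := ((pow_cexp_int p z hz).const_mul (p+1 : ℂ)).sub ((pow_cexp_int (p+1) z hz).const_mul z)
    have htend : Tendsto (fun x : ℝ => (x:ℂ) ^ (p+1) * Complex.exp (-(z * x))) atTop (𝓝 0) := by
      rw [tendsto_zero_iff_norm_tendsto_zero]
      have h3 := tendsto_rpow_mul_exp_neg_mul_atTop_nhds_zero (p+1 : ℕ) z.re hz
      refine h3.congr' ?_
      filter_upwards [eventually_ge_atTop 0] with x hx
      rw [norm_mul, norm_exp_neg_mul, norm_pow, Complex.norm_real, Real.norm_of_nonneg hx, Real.rpow_natCast, neg_mul]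
    have := integral_Ioi_of_hasDerivAt_of_tendsto' hder hi htend
    rw [integral_sub ((pow_cexp_int p z hz).const_mul (p+1 : ℂ)) ((pow_cexp_int (p+1) z hz).const_mul z),
      integral_const_mul, integral_const_mul, ih] at this
    simp at this
    rw [Nat.factorial_succ]
    push_cast
    rw [sub_eq_zero] at this
    have h5 : ∫ x in Ioi (0:ℝ), (x : ℂ) ^ (p+1) * Complex.exp (-(z * x)) = z⁻¹ * (z * ∫ x in Ioi (0:ℝ), (x : ℂ) ^ (p+1) * Complex.exp (-(z * x))) := by
      field_simp
    rw [h5, ← this]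
    field_simp
    ring

lemma J_lim (S : ℝ → ℝ) (hint : ∀ ε : ℝ, 0 < ε → IntegrableOn (fun x => S x * Real.exp (-(ε * x))) (Ioi 0))
    (c : ℝ) (p : ℕ) (H : ℂ → ℂ) (hH : ContinuousOn H {z | 0 ≤ z.re})
    (hL : ∀ z : ℂ, 0 < z.re → ∫ x in Ioi (0:ℝ), (S x : ℂ) * Complex.exp (-(z * x)) = c / z ^ (p + 1) + H z / z ^ p)
    (l : ℝ) (hl : 0 < l) :
    Tendsto (fun T : ℝ => (∫ x in Ioi (0:ℝ), S x * Real.exp (-(1 / T * x)) * fK (l * (T - x))) / T ^ p) atTop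
      (𝓝 (c / p.factorial * (Real.exp (-1) * ∫ y, fK (l * y)))) := by
  set w := c / p.factorial with hw
  set Hc : ℂ → ℂ := fun z => H (⟨max z.re 0, z.im⟩) with hHc
  have hHcc : Continuous Hc := by
    apply hH.comp_continuous
    · have : (fun z : ℂ => (⟨max z.re 0, z.im⟩ : ℂ)) = fun z : ℂ => ((max z.re 0 : ℝ) : ℂ) + ((z.im : ℝ) : ℂ) * Complex.I := by
        ext z; exact Complex.mk_eq_add_mul_I _ _
      rw [this]
      fun_prop
    · intro z; simp
  have hHe : ∀ z : ℂ, 0 ≤ z.re → Hc z = H z := by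
    intro z hz; simp [hHc, max_eq_left hz]
  have hosc := osc_aux Hc hHcc l hl p
  have hbdd : ∀ T : ℝ, ∀ᵐ x ∂(volume.restrict (Ioi (0:ℝ))), ‖fK (l * (T - x))‖ ≤ 5 := by
    intro T; filter_upwards with x
    rw [Real.norm_of_nonneg (fK_nonneg _)]
    refine (fK_le _).trans ?_
    have : (1 + (l * (T - x)) ^ 2)⁻¹ ≤ 1 := inv_le_one_of_one_le₀ (by nlinarith [sq_nonneg (l * (T - x))])
    linarith
  have hfm : ∀ T : ℝ, AEStronglyMeasurable (fun x : ℝ => fK (l * (T - x))) (volume.restrict (Ioi (0:ℝ))) := by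
    intro T; have := fK_meas; apply Measurable.aestronglyMeasurable; fun_prop
  have h1 : Tendsto (fun T : ℝ => ((∫ x in Ioi (0:ℝ), (S x - w * x ^ p) * Real.exp (-(1 / T * x)) * fK (l * (T - x))) / T ^ p : ℝ)) atTop (𝓝 0) := by
    have h2 : Tendsto (fun T : ℝ => (((∫ x in Ioi (0:ℝ), (S x - w * x ^ p) * Real.exp (-(1 / T * x)) * fK (l * (T - x))) / T ^ p : ℝ) : ℂ)) atTop (𝓝 0) := by
      refine hosc.congr' ?_
      filter_upwards [eventually_gt_atTop 0] with T hT
      have hT' : 0 < 1 / T := by positivity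
      symm
      rw [Complex.ofReal_div (∫ x in Ioi (0:ℝ), (S x - w * x ^ p) * Real.exp (-(1 / T * x)) * fK (l * (T - x))), four_fubini (fun x => S x - w * x ^ p) (1/T) l T, ← integral_div]
      · congr 1; ext u
        set z : ℂ := ((1 / T : ℝ) : ℂ) + Complex.I * (l * u) with hz
        have hzre : z.re = 1 / T := by simp [hz]
        have hz0 : 0 < z.re := by rw [hzre]; exact hT'
        have hzn : z ≠ 0 := by intro h; rw [h] at hz0; simp at hz0
        have e : ∫ x in Ioi (0:ℝ), ((S x - w * x ^ p : ℝ) : ℂ) * Complex.exp (-(z * x)) = Hc z / z ^ p := by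
          have : ∀ x : ℝ, ((S x - w * x ^ p : ℝ) : ℂ) * Complex.exp (-(z * x)) = (S x : ℂ) * Complex.exp (-(z * x)) - w * ((x : ℂ) ^ p * Complex.exp (-(z * x))) := by
            intro x; push_cast; ring
          simp_rw [this]
          rw [integral_sub, integral_const_mul, pow_laplace p z hz0, hL z hz0, hHe z hz0.le, hw]
          · have : (p.factorial : ℂ) ≠ 0 := by exact_mod_cast p.factorial_ne_zero
            push_cast
            field_simp
            ring
          · have h3 := hint z.re hz0
            refine Integrable.mono h3 ?_ ?_
            · have h4 := Complex.continuous_ofReal.comp_aestronglyMeasurable h3.aestronglyMeasurable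
              have h5 : AEStronglyMeasurable (fun x : ℝ => Complex.exp (-((z.im * x : ℝ) * Complex.I))) (volume.restrict (Ioi (0:ℝ))) := by
                apply Continuous.aestronglyMeasurable; fun_prop
              refine (h4.mul h5).congr ?_
              filter_upwards with x
              simp only [Pi.mul_apply]
              push_cast
              rw [mul_assoc, ← Complex.exp_add]
              congr 2
              conv_rhs => rw [← Complex.re_add_im z]
              ring
            · filter_upwards with x
              rw [norm_mul, norm_exp_neg_mul]
              simp
          · exact (pow_cexp_int p z hz0).const_mul _
        rw [e]
        have hTz : (1 + Complex.I * (T * (l * u))) = T * z := by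
          rw [hz]; push_cast
          have : (T:ℂ) ≠ 0 := by exact_mod_cast hT.ne'
          field_simp
        rw [hTz, mul_pow]
        push_cast
        have : (T:ℂ) ≠ 0 := by exact_mod_cast hT.ne'
        field_simp
      · have := (hint _ hT').sub ((pow_exp_int p _ hT').const_mul w)
        refine this.congr ?_
        filter_upwards with x
        simp; ring
    have := (Complex.continuous_re.tendsto 0).comp h2
    refine this.congr ?_
    intro T; exact Complex.ofReal_re _
  have h3 := h1.add ((main_lim l hl p).const_mul w)
  rw [zero_add] at h3
  refine h3.congr' ?_
  filter_upwards [eventually_gt_atTop 0] with T hT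
  have hT' : 0 < 1 / T := by positivity
  rw [← mul_div_assoc, ← add_div, ← integral_const_mul, ← integral_add]
  · congr 2; ext x; ring
  · have := ((hint _ hT').sub ((pow_exp_int p _ hT').const_mul w)).mul_bdd (hfm T) (hbdd T)
    refine this.congr ?_
    filter_upwards with x
    simp; left; ring
  · exact ((pow_exp_int p _ hT').mul_bdd (hfm T) (hbdd T)).const_mul w
end Taub3

section Taub4
open MeasureTheory Set Topology

lemma fK_scale (l : ℝ) (hl : 0 < l) : l * ∫ y, fK (l * y) = ∫ y, fK y := by
  rw [Measure.integral_comp_mul_left fK l, abs_of_pos (by positivity)]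
  simp only [smul_eq_mul]
  field_simp

lemma fK_q_lim (h : ℝ) (hh : 0 < h) :
    Tendsto (fun l : ℝ => l * ∫ y in (-h)..h, fK (l * y)) atTop (𝓝 (∫ y, fK y)) := by
  have : Tendsto (fun l : ℝ => ∫ y in (l * -h)..(l * h), fK y) atTop (𝓝 (∫ y, fK y)) := by
    apply intervalIntegral_tendsto_integral fK_int
    · exact tendsto_id.atTop_mul_const_of_neg (by linarith)
    · exact tendsto_id.atTop_mul_const hh
  refine this.congr ?_
  intro l
  rw [intervalIntegral.mul_integral_comp_mul_left]

lemma fK_shift (l T h : ℝ) : ∫ x in (T - h)..(T + h), fK (l * (T - x)) = ∫ y in (-h)..h, fK (l * y) := by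
  rw [intervalIntegral.integral_comp_sub_left (fun y => fK (l * y)) T]
  simp

lemma ratio_lim (h : ℝ) (p : ℕ) : Tendsto (fun T : ℝ => (T / (T + h)) ^ p) atTop (𝓝 1) := by
  have : Tendsto (fun T : ℝ => T / (T + h)) atTop (𝓝 1) := by
    have h1 : Tendsto (fun T : ℝ => 1 - h * (T + h)⁻¹) atTop (𝓝 (1 - h * 0)) :=
      tendsto_const_nhds.sub ((tendsto_inv_atTop_zero.comp (tendsto_atTop_add_const_right _ h tendsto_id)).const_mul h)
    simp only [mul_zero, sub_zero] at h1
    refine h1.congr' ?_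
    filter_upwards [eventually_gt_atTop (-h)] with T hT
    have : T + h ≠ 0 := by linarith
    field_simp
    ring
  simpa using this.pow p

lemma expdiv_lim (a h : ℝ) : Tendsto (fun T : ℝ => Real.exp (a + h / T)) atTop (𝓝 (Real.exp a)) := by
  apply (Real.continuous_exp.tendsto _).comp
  have := (tendsto_inv_atTop_zero (𝕜 := ℝ)).const_mul h
  simpa [div_eq_mul_inv] using this.const_add a

theorem taub (S : ℝ → ℝ) (ρ : ℝ) (hρ : 0 < ρ) (hS0 : ∀ x, 0 ≤ S x)
    (hmono : ∀ x y, x ≤ y → S x * Real.exp (ρ * x) ≤ S y * Real.exp (ρ * y))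
    (hint : ∀ ε : ℝ, 0 < ε → IntegrableOn (fun x => S x * Real.exp (-(ε * x))) (Ioi 0))
    (c : ℝ) (p : ℕ) (H : ℂ → ℂ) (hH : ContinuousOn H {z | 0 ≤ z.re})
    (hL : ∀ z : ℂ, 0 < z.re → ∫ x in Ioi (0:ℝ), (S x : ℂ) * Complex.exp (-(z * x)) = c / z ^ (p + 1) + H z / z ^ p) :
    Tendsto (fun x : ℝ => S x / x ^ p) atTop (𝓝 (c / p.factorial)) := by
  set w := c / p.factorial with hw
  set κ := ∫ y, fK y with hκ
  have hκ0 : 0 < κ := fK_pos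
  set J : ℝ → ℝ → ℝ := fun l T => (∫ x in Ioi (0:ℝ), S x * Real.exp (-(1 / T * x)) * fK (l * (T - x))) / T ^ p with hJ
  have hJl : ∀ l : ℝ, 0 < l → Tendsto (fun T => l * J l T) atTop (𝓝 (w * (Real.exp (-1) * κ))) := by
    intro l hl
    have := (J_lim S hint c p H hH hL l hl).const_mul l
    rw [show l * (c / p.factorial * (Real.exp (-1) * ∫ y, fK (l * y))) = w * (Real.exp (-1) * κ) by
      rw [hκ, ← fK_scale l hl, hw]; ring] at this
    exact this
  have hbdd : ∀ l T : ℝ, ∀ᵐ x ∂(volume.restrict (Ioi (0:ℝ))), ‖fK (l * (T - x))‖ ≤ 5 := by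
    intro l T; filter_upwards with x
    rw [Real.norm_of_nonneg (fK_nonneg _)]
    refine (fK_le _).trans ?_
    have : (1 + (l * (T - x)) ^ 2)⁻¹ ≤ 1 := inv_le_one_of_one_le₀ (by nlinarith [sq_nonneg (l * (T - x))])
    linarith
  have hfm : ∀ l T : ℝ, AEStronglyMeasurable (fun x : ℝ => fK (l * (T - x))) (volume.restrict (Ioi (0:ℝ))) := by
    intro l T; have := fK_meas; apply Measurable.aestronglyMeasurable; fun_prop
  have hIJ : ∀ l T : ℝ, 0 < T → IntegrableOn (fun x => S x * Real.exp (-(1 / T * x)) * fK (l * (T - x))) (Ioi 0) :=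
    fun l T hT => (hint (1/T) (by positivity)).mul_bdd (hfm l T) (hbdd l T)
  have hKint : ∀ l T : ℝ, 0 < l → Integrable (fun x => fK (l * (T - x))) := by
    intro l T hl
    exact (fK_int.comp_mul_left' hl.ne').comp_sub_left T
  -- upper bound
  have upper : ∀ η : ℝ, 0 < η → ∀ᶠ x : ℝ in atTop, S x / x ^ p < w + η := by
    intro η hη
    obtain ⟨h, hh, hwh⟩ : ∃ h : ℝ, 0 < h ∧ w * Real.exp (2 * ρ * h) < w + η := by
      have : Tendsto (fun h : ℝ => w * Real.exp (2 * ρ * h)) (𝓝[>] 0) (𝓝 w) := by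
        have hc : Continuous fun h : ℝ => w * Real.exp (2 * ρ * h) := by fun_prop
        have := hc.tendsto 0
        simp at this
        exact this.mono_left nhdsWithin_le_nhds
      have h2 := this.eventually_lt_const (show w < w + η by linarith)
      obtain ⟨h, h3, h4⟩ := (h2.and self_mem_nhdsWithin).exists
      exact ⟨h, h4, h3⟩
    obtain ⟨l, hl, hq0, hlq⟩ : ∃ l : ℝ, 0 < l ∧ 0 < l * ∫ y in (-h)..h, fK (l * y) ∧
        w * Real.exp (2 * ρ * h) * κ / (l * ∫ y in (-h)..h, fK (l * y)) < w + η := by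
      have h1 := fK_q_lim h hh
      have h2 : Tendsto (fun l : ℝ => w * Real.exp (2 * ρ * h) * κ / (l * ∫ y in (-h)..h, fK (l * y))) atTop (𝓝 (w * Real.exp (2 * ρ * h) * κ / κ)) :=
        tendsto_const_nhds.div h1 hκ0.ne'
      rw [mul_div_cancel_right₀ _ hκ0.ne'] at h2
      obtain ⟨l, a, b, d⟩ := ((h2.eventually_lt_const hwh).and ((h1.eventually_const_lt hκ0).and (eventually_gt_atTop 0))).exists
      exact ⟨l, d, b, a⟩
    set q := ∫ y in (-h)..h, fK (l * y) with hq
    have key : ∀ᶠ T : ℝ in atTop, S (T - h) / (T - h) ^ p ≤ l * J l T * Real.exp ((2 * ρ * h + 1) + h / T) / (l * q) * (T / (T + -h)) ^ p := by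
      filter_upwards [eventually_gt_atTop h] with T hT
      have hT0 : 0 < T := by linarith
      have hq0' : 0 < q := pos_of_mul_pos_right hq0 hl.le
      have lb : S (T - h) * Real.exp (-(2 * ρ * h + 1 + h / T)) * q ≤ ∫ x in Ioi (0:ℝ), S x * Real.exp (-(1 / T * x)) * fK (l * (T - x)) := by
        rw [hq, ← fK_shift l T h, ← intervalIntegral.integral_const_mul, intervalIntegral.integral_of_le (by linarith)]
        calc _ ≤ ∫ x in Ioc (T - h) (T + h), S x * Real.exp (-(1 / T * x)) * fK (l * (T - x)) := by
              apply setIntegral_mono_on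
              · exact ((hKint l T hl).const_mul _).integrableOn
              · exact (hIJ l T hT0).mono_set (fun x hx => lt_of_le_of_lt (by linarith) hx.1)
              · exact measurableSet_Ioc
              · intro x hx
                apply mul_le_mul_of_nonneg_right _ (fK_nonneg _)
                have h1 := hmono (T - h) x hx.1.le
                have h2 : S (T - h) * Real.exp (-(2 * ρ * h)) ≤ S x := by
                  have : S (T - h) * Real.exp (ρ * (T - h)) * Real.exp (-(ρ * x)) ≤ S x := by
                    calc _ ≤ S x * Real.exp (ρ * x) * Real.exp (-(ρ * x)) := mul_le_mul_of_nonneg_right h1 (Real.exp_pos _).le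
                      _ = S x := by rw [mul_assoc (S _), ← Real.exp_add]; simp
                  refine le_trans ?_ this
                  rw [mul_assoc (S _), ← Real.exp_add]
                  apply mul_le_mul_of_nonneg_left _ (hS0 _)
                  apply Real.exp_le_exp.mpr
                  nlinarith [hx.2]
                have h3 : Real.exp (-(1 + h / T)) ≤ Real.exp (-(1 / T * x)) := by
                  apply Real.exp_le_exp.mpr
                  have : 1 / T * x ≤ 1 / T * (T + h) := mul_le_mul_of_nonneg_left hx.2 (by positivity)
                  have h4 : 1 / T * (T + h) = 1 + h / T := by field_simp
                  linarith
                calc S (T - h) * Real.exp (-(2 * ρ * h + 1 + h / T)) = (S (T - h) * Real.exp (-(2 * ρ * h))) * Real.exp (-(1 + h / T)) := by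
                      rw [mul_assoc (S _), ← Real.exp_add]; ring_nf
                  _ ≤ _ := mul_le_mul h2 h3 (Real.exp_pos _).le (hS0 _)
          _ ≤ _ := by
              apply setIntegral_mono_set (hIJ l T hT0)
              · filter_upwards with x
                exact mul_nonneg (mul_nonneg (hS0 _) (Real.exp_pos _).le) (fK_nonneg _)
              · exact LE.le.eventuallyLE (fun x hx => lt_of_le_of_lt (by linarith) hx.1)
      have hTh : 0 < T - h := by linarith
      have e1 : l * J l T * Real.exp ((2 * ρ * h + 1) + h / T) / (l * q) * (T / (T + -h)) ^ p
          = (∫ x in Ioi (0:ℝ), S x * Real.exp (-(1 / T * x)) * fK (l * (T - x))) * Real.exp ((2 * ρ * h + 1) + h / T) / q / (T - h) ^ p := by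
        simp only [hJ]
        rw [← sub_eq_add_neg, div_pow]
        field_simp
      rw [e1]
      apply div_le_div_of_nonneg_right _ (by positivity)
      rw [le_div_iff₀ hq0']
      calc S (T - h) * q = (S (T - h) * Real.exp (-(2 * ρ * h + 1 + h / T)) * q) * Real.exp ((2 * ρ * h + 1) + h / T) := by
            rw [Real.exp_neg]; field_simp
        _ ≤ _ := mul_le_mul_of_nonneg_right lb (Real.exp_pos _).le
    have lim : Tendsto (fun T : ℝ => l * J l T * Real.exp ((2 * ρ * h + 1) + h / T) / (l * q) * (T / (T + -h)) ^ p) atTop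
        (𝓝 (w * Real.exp (2 * ρ * h) * κ / (l * q))) := by
      have := ((((hJl l hl).mul (expdiv_lim (2 * ρ * h + 1) h)).div_const (l * q)).mul (ratio_lim (-h) p))
      rw [show w * Real.exp (2 * ρ * h) * κ / (l * q) = w * (Real.exp (-1) * κ) * Real.exp (2 * ρ * h + 1) / (l * q) * 1 by
        rw [Real.exp_add, Real.exp_neg]; field_simp]
      exact this
    have ev : ∀ᶠ T : ℝ in atTop, S (T - h) / (T - h) ^ p < w + η := by
      filter_upwards [key, lim.eventually_lt_const hlq] with T h1 h2
      exact lt_of_le_of_lt h1 h2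
    have := (tendsto_atTop_add_const_right _ h (tendsto_id (α := ℝ))).eventually ev
    filter_upwards [this] with x hx
    simpa using hx
  -- global bound
  obtain ⟨C, hC0, hC⟩ : ∃ C : ℝ, 0 ≤ C ∧ ∀ x : ℝ, 0 < x → S x ≤ C * (1 + x) ^ p := by
    obtain ⟨x0, hx0⟩ := (eventually_atTop.mp (upper 1 one_pos))
    set x1 := max x0 1 with hx1
    refine ⟨max (|w + 1|) (S x1 * Real.exp (ρ * x1)), le_max_of_le_left (abs_nonneg _), ?_⟩
    intro x hx
    rcases le_total x1 x with hxx | hxx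
    · have h1 := hx0 x ((le_max_left _ _).trans hxx)
      rw [div_lt_iff₀ (by positivity)] at h1
      calc S x ≤ (w + 1) * x ^ p := h1.le
        _ ≤ |w + 1| * x ^ p := mul_le_mul_of_nonneg_right (le_abs_self _) (by positivity)
        _ ≤ max (|w + 1|) (S x1 * Real.exp (ρ * x1)) * x ^ p := mul_le_mul_of_nonneg_right (le_max_left _ _) (by positivity)
        _ ≤ _ := by
          apply mul_le_mul_of_nonneg_left _ (le_max_of_le_left (abs_nonneg _))
          exact pow_le_pow_left₀ hx.le (by linarith) p
    · have h1 := hmono x x1 hxx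
      have h2 : S x ≤ S x * Real.exp (ρ * x) := le_mul_of_one_le_right (hS0 _) (Real.one_le_exp (by positivity))
      calc S x ≤ S x1 * Real.exp (ρ * x1) := h2.trans h1
        _ ≤ max (|w + 1|) (S x1 * Real.exp (ρ * x1)) := le_max_right _ _
        _ ≤ _ := le_mul_of_one_le_right (le_max_of_le_left (abs_nonneg _)) (one_le_pow₀ (by linarith))
  set C' := C * (p.factorial * Real.exp 1) with hC'
  have hC'0 : 0 ≤ C' := by positivity
  have hCb : ∀ T : ℝ, 1 ≤ T → ∀ x : ℝ, 0 < x → S x * Real.exp (-(1 / T * x)) ≤ C' * T ^ p := by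
    intro T hT x hx
    have hT0 : 0 < T := by linarith
    have h1 := Real.pow_div_factorial_le_exp (1 + x / T) (by positivity) p
    rw [div_le_iff₀ (by positivity)] at h1
    have h2 : (1 + x) ^ p ≤ T ^ p * (1 + x / T) ^ p := by
      rw [← mul_pow]
      apply pow_le_pow_left₀ (by linarith)
      have : T * (1 + x / T) = T + x := by field_simp
      linarith
    calc S x * Real.exp (-(1 / T * x)) ≤ C * (T ^ p * (Real.exp (1 + x / T) * p.factorial)) * Real.exp (-(1 / T * x)) := by
          apply mul_le_mul_of_nonneg_right _ (Real.exp_pos _).le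
          refine (hC x hx).trans (mul_le_mul_of_nonneg_left (h2.trans ?_) hC0)
          exact mul_le_mul_of_nonneg_left h1 (by positivity)
      _ = C' * T ^ p := by
          rw [hC', Real.exp_add, Real.exp_neg, show 1 / T * x = x / T by ring]
          field_simp
  -- lower bound
  have lower : ∀ η : ℝ, 0 < η → ∀ᶠ x : ℝ in atTop, w - η < S x / x ^ p := by
    intro η hη
    obtain ⟨h, hh, hwh⟩ : ∃ h : ℝ, 0 < h ∧ w - η < w * Real.exp (-(2 * ρ * h)) := by
      have : Tendsto (fun h : ℝ => w * Real.exp (-(2 * ρ * h))) (𝓝[>] 0) (𝓝 w) := by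
        have hc : Continuous fun h : ℝ => w * Real.exp (-(2 * ρ * h)) := by fun_prop
        have := hc.tendsto 0
        simp at this
        exact this.mono_left nhdsWithin_le_nhds
      have h2 := this.eventually_const_lt (show w - η < w by linarith)
      obtain ⟨h, h3, h4⟩ := (h2.and self_mem_nhdsWithin).exists
      exact ⟨h, h4, h3⟩
    obtain ⟨l, hl, hlq⟩ : ∃ l : ℝ, 0 < l ∧
        w - η < (w * (Real.exp (-1) * κ) - C' * (κ - l * ∫ y in (-h)..h, fK (l * y))) * Real.exp (1 - 2 * ρ * h) / κ := by
      have h1 := fK_q_lim h hh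
      have h2 : Tendsto (fun l : ℝ => (w * (Real.exp (-1) * κ) - C' * (κ - l * ∫ y in (-h)..h, fK (l * y))) * Real.exp (1 - 2 * ρ * h) / κ) atTop (𝓝 ((w * (Real.exp (-1) * κ) - C' * (κ - κ)) * Real.exp (1 - 2 * ρ * h) / κ)) :=
        (((tendsto_const_nhds.sub ((tendsto_const_nhds.sub h1).const_mul C'))).mul_const _).div_const κ
      rw [show (w * (Real.exp (-1) * κ) - C' * (κ - κ)) * Real.exp (1 - 2 * ρ * h) / κ = w * Real.exp (-(2 * ρ * h)) by
        rw [sub_eq_add_neg 1, Real.exp_add, Real.exp_neg 1]; field_simp; ring] at h2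
      obtain ⟨l, a, d⟩ := ((h2.eventually_const_lt hwh).and (eventually_gt_atTop 0)).exists
      exact ⟨l, d, a⟩
    set q := ∫ y in (-h)..h, fK (l * y) with hq
    have key : ∀ᶠ T : ℝ in atTop, (l * J l T - C' * (κ - l * q)) * Real.exp ((1 - 2 * ρ * h) + -h / T) / κ * (T / (T + h)) ^ p ≤ S (T + h) / (T + h) ^ p := by
      filter_upwards [eventually_gt_atTop h, eventually_ge_atTop 1] with T hT hT1
      have hT0 : 0 < T := by linarith
      have ub : (∫ x in Ioi (0:ℝ), S x * Real.exp (-(1 / T * x)) * fK (l * (T - x))) ≤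
          S (T + h) * Real.exp (-(1 - 2 * ρ * h + -h / T)) * (κ / l) + C' * T ^ p * (κ / l - q) := by
        have hfull : ∫ x, fK (l * (T - x)) = κ / l := by
          rw [integral_sub_left_eq_self (fun y => fK (l * y)) volume T, hκ, ← fK_scale l hl]; field_simp
        set A := S (T + h) * Real.exp (-(1 - 2 * ρ * h + -h / T)) with hA
        have hA0 : 0 ≤ A := mul_nonneg (hS0 _) (Real.exp_pos _).le
        have hqs : ∫ x in Ioc (T - h) (T + h), fK (l * (T - x)) = q := by
          rw [hq, ← fK_shift l T h, intervalIntegral.integral_of_le (by linarith)]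
        have hcomp : ∫ x in (Ioc (T - h) (T + h))ᶜ, fK (l * (T - x)) = κ / l - q := by
          have := integral_add_compl (measurableSet_Ioc (a := T - h) (b := T + h)) (hKint l T hl)
          rw [hqs, hfull] at this
          linarith
        have hI1 : Integrable (fun x => A * fK (l * (T - x)) + C' * T ^ p * (Ioc (T - h) (T + h))ᶜ.indicator (fun x => fK (l * (T - x))) x) :=
          ((hKint l T hl).const_mul A).add (((hKint l T hl).indicator measurableSet_Ioc.compl).const_mul _)
        have hnn : ∀ x, 0 ≤ A * fK (l * (T - x)) + C' * T ^ p * (Ioc (T - h) (T + h))ᶜ.indicator (fun x => fK (l * (T - x))) x := by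
          intro x
          have := fK_nonneg (l * (T - x))
          have h2 : 0 ≤ (Ioc (T - h) (T + h))ᶜ.indicator (fun x => fK (l * (T - x))) x := indicator_nonneg (fun y _ => fK_nonneg _) x
          positivity
        calc _ ≤ ∫ x in Ioi (0:ℝ), (A * fK (l * (T - x)) + C' * T ^ p * (Ioc (T - h) (T + h))ᶜ.indicator (fun x => fK (l * (T - x))) x) := by
              apply setIntegral_mono_on (hIJ l T hT0) hI1.integrableOn measurableSet_Ioi
              intro x hx
              have hk := fK_nonneg (l * (T - x))
              by_cases hxm : x ∈ Ioc (T - h) (T + h)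
              · rw [indicator_of_notMem (by simpa using hxm)]
                rw [mul_zero, add_zero]
                apply mul_le_mul_of_nonneg_right _ hk
                have h1 := hmono x (T + h) hxm.2
                have h2 : S x ≤ S (T + h) * Real.exp (2 * ρ * h) := by
                  have : S x ≤ S (T + h) * Real.exp (ρ * (T + h)) * Real.exp (-(ρ * x)) := by
                    calc S x = S x * Real.exp (ρ * x) * Real.exp (-(ρ * x)) := by rw [mul_assoc (S _), ← Real.exp_add]; simp
                      _ ≤ _ := mul_le_mul_of_nonneg_right h1 (Real.exp_pos _).le
                  refine le_trans this ?_
                  rw [mul_assoc (S _), ← Real.exp_add]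
                  apply mul_le_mul_of_nonneg_left _ (hS0 _)
                  apply Real.exp_le_exp.mpr
                  nlinarith [hxm.1]
                have h3 : Real.exp (-(1 / T * x)) ≤ Real.exp (-(1 + -h / T)) := by
                  apply Real.exp_le_exp.mpr
                  have : 1 / T * (T - h) ≤ 1 / T * x := mul_le_mul_of_nonneg_left hxm.1.le (by positivity)
                  have h4 : 1 / T * (T - h) = 1 + -h / T := by field_simp; ring
                  linarith
                calc _ ≤ S (T + h) * Real.exp (2 * ρ * h) * Real.exp (-(1 + -h / T)) := by
                      apply mul_le_mul h2 h3 (Real.exp_pos _).le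
                      exact mul_nonneg (hS0 _) (Real.exp_pos _).le
                  _ = A := by rw [hA, mul_assoc (S _), ← Real.exp_add]; ring_nf
              · rw [indicator_of_mem (by simpa using hxm)]
                have h1 := mul_le_mul_of_nonneg_right (hCb T hT1 x hx) hk
                have h2 := mul_nonneg hA0 hk
                linarith
          _ ≤ ∫ x, (A * fK (l * (T - x)) + C' * T ^ p * (Ioc (T - h) (T + h))ᶜ.indicator (fun x => fK (l * (T - x))) x) :=
              setIntegral_le_integral hI1 (Eventually.of_forall hnn)
          _ = _ := by
              rw [integral_add ((hKint l T hl).const_mul A) (((hKint l T hl).indicator measurableSet_Ioc.compl).const_mul _),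
                integral_const_mul, integral_const_mul, integral_indicator measurableSet_Ioc.compl, hcomp, hfull]
      have hTh : 0 < T + h := by linarith
      rw [div_pow]
      have e1 : l * J l T ≤ S (T + h) * Real.exp (-(1 - 2 * ρ * h + -h / T)) * κ / T ^ p + C' * (κ - l * q) := by
        have : l * J l T ≤ l * ((S (T + h) * Real.exp (-(1 - 2 * ρ * h + -h / T)) * (κ / l) + C' * T ^ p * (κ / l - q)) / T ^ p) := by
          apply mul_le_mul_of_nonneg_left _ hl.le
          exact div_le_div_of_nonneg_right ub (by positivity)
        refine this.trans (le_of_eq ?_)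
        field_simp
      calc _ ≤ (S (T + h) * Real.exp (-(1 - 2 * ρ * h + -h / T)) * κ / T ^ p) * Real.exp ((1 - 2 * ρ * h) + -h / T) / κ * (T ^ p / (T + h) ^ p) := by
            gcongr
            linarith
        _ = _ := by
            rw [Real.exp_neg]
            have := (Real.exp_pos (1 - 2 * ρ * h + -h / T)).ne'
            generalize Real.exp (1 - 2 * ρ * h + -h / T) = E at this
            field_simp
    have lim : Tendsto (fun T : ℝ => (l * J l T - C' * (κ - l * q)) * Real.exp ((1 - 2 * ρ * h) + -h / T) / κ * (T / (T + h)) ^ p) atTop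
        (𝓝 ((w * (Real.exp (-1) * κ) - C' * (κ - l * q)) * Real.exp (1 - 2 * ρ * h) / κ)) := by
      have := (((((hJl l hl).sub_const (C' * (κ - l * q))).mul (expdiv_lim (1 - 2 * ρ * h) (-h))).div_const κ).mul (ratio_lim h p))
      rwa [mul_one] at this
    have ev : ∀ᶠ T : ℝ in atTop, w - η < S (T + h) / (T + h) ^ p := by
      filter_upwards [key, lim.eventually_const_lt hlq] with T h1 h2
      exact lt_of_lt_of_le h2 h1
    have := (tendsto_atTop_add_const_right _ (-h) (tendsto_id (α := ℝ))).eventually ev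
    filter_upwards [this] with x hx
    simpa using hx
  rw [Metric.tendsto_nhds]
  intro η hη
  filter_upwards [upper η hη, lower η hη] with x h1 h2
  rw [Real.dist_eq, abs_lt]
  constructor <;> linarith
end Taub4

section Taub5
open MeasureTheory Set Topology

lemma set_ae (a : ℝ) (ha : 0 ≤ a) : (Ioi 0 ∩ Ici a : Set ℝ) =ᵐ[volume] Ioi a := by
  have h : (Ioi 0 ∩ Ioi a : Set ℝ) = Ioi a := by
    rw [Ioi_inter_Ioi, max_eq_right ha]
  have := ((ae_eq_refl (Ioi (0:ℝ))).inter Ioi_ae_eq_Ici.symm : (Ioi 0 ∩ Ici a : Set ℝ) =ᵐ[volume] (Ioi 0 ∩ Ioi a : Set ℝ))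
  rwa [h] at this

lemma lap_term (a : ℝ) (ha : 0 ≤ a) (s : ℂ) (hs : 0 < s.re) :
    ∫ x in Ioi (0:ℝ), (Ici a).indicator (fun x : ℝ => Complex.exp (-(s * x))) x = Complex.exp (-(s * a)) / s := by
  rw [setIntegral_indicator measurableSet_Ici, setIntegral_congr_set (set_ae a ha)]
  have := integral_exp_mul_complex_Ioi (a := -s) (by simpa using hs) a
  simpa using this

lemma lap_term_int (a : ℝ) (s : ℂ) (hs : 0 < s.re) :
    Integrable ((Ici a).indicator (fun x : ℝ => Complex.exp (-(s * x)))) (volume.restrict (Ioi 0)) := by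
  have : IntegrableOn (fun x : ℝ => Complex.exp (-(s * x))) (Ioi 0) := by
    simpa using pow_cexp_int 0 s hs
  exact this.indicator measurableSet_Ici

lemma lap_term_norm (a : ℝ) (ha : 0 ≤ a) (s : ℂ) (hs : 0 < s.re) :
    ∫ x in Ioi (0:ℝ), ‖(Ici a).indicator (fun x : ℝ => Complex.exp (-(s * x))) x‖ = Real.exp (-(s.re * a)) / s.re := by
  simp_rw [norm_indicator_eq_indicator_norm, norm_exp_neg_mul]
  rw [setIntegral_indicator measurableSet_Ici, setIntegral_congr_set (set_ae a ha)]
  have := integral_exp_mul_Ioi (a := -s.re) (by simpa using hs) a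
  simpa using this

theorem taub_dir (b : ℕ → ℝ) (hb : ∀ n, 0 ≤ b n) (ρ : ℝ) (hρ : 0 < ρ)
    (hsum : ∀ s : ℂ, ρ < s.re → LSeriesSummable (fun n => (b n : ℂ)) s)
    (c : ℝ) (p : ℕ) (G : ℂ → ℂ) (hG : ContinuousOn G {z | ρ ≤ z.re})
    (hF : ∀ s : ℂ, ρ < s.re → LSeries (fun n => (b n : ℂ)) s = c / (s - ρ) ^ (p + 1) + G s / (s - ρ) ^ p) :
    Tendsto (fun N : ℕ => (∑ n ∈ Finset.Icc 1 N, b n) / ((N : ℝ) ^ ρ * (Real.log N) ^ p)) atTop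
      (𝓝 (c / ρ / p.factorial)) := by
  set B : ℝ → ℝ := fun x => ∑ n ∈ Finset.Icc 1 ⌊Real.exp x⌋₊, b n with hB
  have hB0 : ∀ x, 0 ≤ B x := fun x => Finset.sum_nonneg (fun n _ => hb n)
  have hBm : Monotone B := by
    intro x y hxy
    apply Finset.sum_le_sum_of_subset_of_nonneg
    · exact Finset.Icc_subset_Icc_right (Nat.floor_mono (Real.exp_le_exp.mpr hxy))
    · intro n _ _; exact hb n
  have hmem : ∀ (x : ℝ) (n : ℕ), n ≠ 0 → (n ∈ Finset.Icc 1 ⌊Real.exp x⌋₊ ↔ x ∈ Ici (Real.log n)) := by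
    intro x n hn
    have hn' : (0:ℝ) < n := by exact_mod_cast Nat.pos_of_ne_zero hn
    rw [Finset.mem_Icc, Nat.le_floor_iff (Real.exp_pos x).le, mem_Ici, Real.log_le_iff_le_exp hn']
    constructor
    · exact fun h => h.2
    · exact fun h => ⟨Nat.one_le_iff_ne_zero.mpr hn, h⟩
  have htn : ∀ (s : ℂ) (n : ℕ), n ≠ 0 → Complex.exp (-(s * Real.log n)) = ((n : ℂ) ^ s)⁻¹ := by
    intro s n hn
    rw [Complex.cpow_def_of_ne_zero (by exact_mod_cast hn), ← Complex.exp_neg, Complex.natCast_log, mul_comm]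
  have hexpb : ∀ s : ℝ, ρ < s → ∃ C, ∀ x, B x ≤ C * Real.exp (s * x) := by
    intro s hs
    have h1 := (hsum s (by simpa using hs)).norm
    refine ⟨∑' n, ‖LSeries.term (fun n => (b n : ℂ)) s n‖, fun x => ?_⟩
    have h2 := h1.sum_le_tsum (Finset.Icc 1 ⌊Real.exp x⌋₊) (fun n _ => norm_nonneg _)
    refine le_trans ?_ (mul_le_mul_of_nonneg_right h2 (Real.exp_pos _).le)
    rw [Finset.sum_mul]
    apply Finset.sum_le_sum
    intro n hn
    have hn1 := (Finset.mem_Icc.mp hn).1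
    have hn0 : n ≠ 0 := by omega
    have h3 := (hmem x n hn0).mp hn
    rw [LSeries.norm_term_eq, if_neg hn0]
    simp only [Complex.ofReal_re, Complex.norm_real, Real.norm_of_nonneg (hb n)]
    have hn' : (0:ℝ) < n := by positivity
    have h4 : (n:ℝ) ^ s ≤ Real.exp (s * x) := by
      rw [Real.rpow_def_of_pos hn']
      apply Real.exp_le_exp.mpr
      rw [mul_comm]
      exact mul_le_mul_of_nonneg_left h3 (by linarith)
    rw [div_mul_eq_mul_div, le_div_iff₀ (by positivity)]
    exact mul_le_mul_of_nonneg_left h4 (hb n)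
  have hLB : ∀ s : ℂ, ρ < s.re → ∫ x in Ioi (0:ℝ), (B x : ℂ) * Complex.exp (-(s * x)) = LSeries (fun n => (b n : ℂ)) s / s := by
    intro s hs
    have hs0 : 0 < s.re := by linarith
    set f : ℕ → ℝ → ℂ := fun n x => (if n = 0 then (0:ℂ) else b n) * (Ici (Real.log n)).indicator (fun x : ℝ => Complex.exp (-(s * x))) x with hf
    have hlog : ∀ n : ℕ, 0 ≤ Real.log n := fun n => Real.log_natCast_nonneg n
    have key := hasSum_integral_of_summable_integral_norm (F := f) (μ := volume.restrict (Ioi (0:ℝ)))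
      (fun n => (lap_term_int _ s hs0).const_mul _) (by
        have h1 := ((hsum s hs).norm).div_const s.re
        refine h1.congr ?_
        intro n
        simp only [hf, norm_mul]
        rw [integral_const_mul, lap_term_norm _ (hlog n) s hs0, LSeries.norm_term_eq]
        split_ifs with hn
        · simp
        · have hn' : (0:ℝ) < n := by positivity
          rw [show -(s.re * Real.log n) = -(Real.log n * s.re) by ring, Real.exp_neg, ← Real.rpow_def_of_pos hn']
          ring)
    have e1 : ∀ n, ∫ x in Ioi (0:ℝ), f n x = LSeries.term (fun n => (b n : ℂ)) s n / s := by
      intro n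
      simp only [hf]
      rw [integral_const_mul, lap_term _ (hlog n) s hs0, LSeries.term_def]
      split_ifs with hn
      · simp
      · rw [htn s n hn]; ring
    simp_rw [e1] at key
    have h2 := ((hsum s hs).hasSum).div_const s
    have h3 := h2.unique key
    rw [LSeries, h3]
    congr 1; ext x
    rw [tsum_eq_sum (s := Finset.Icc 1 ⌊Real.exp x⌋₊)]
    · simp only [hB]
      push_cast
      rw [Finset.sum_mul]
      apply Finset.sum_congr rfl
      intro n hn
      have hn0 : n ≠ 0 := by have := (Finset.mem_Icc.mp hn).1; omega
      simp only [hf, if_neg hn0]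
      rw [indicator_of_mem ((hmem x n hn0).mp hn)]
    · intro n hn
      simp only [hf]
      split_ifs with hn0
      · simp
      · rw [indicator_of_notMem (fun h => hn ((hmem x n hn0).mpr h))]; simp
  have T := taub (fun x => B x * Real.exp (-(ρ * x))) ρ hρ (fun x => mul_nonneg (hB0 x) (Real.exp_pos _).le)
    (by
      intro x y hxy
      simp only [mul_assoc, ← Real.exp_add]
      simpa using hBm hxy)
    (by
      intro ε hε
      obtain ⟨C, hC⟩ := hexpb (ρ + ε / 2) (by linarith)
      have h1 : IntegrableOn (fun x : ℝ => C * Real.exp (-(ε / 2 * x))) (Ioi 0) := by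
        have := (pow_exp_int 0 (ε / 2) (by linarith)).const_mul C
        simp only [pow_zero, one_mul] at this
        exact this
      apply h1.mono'
      · apply Measurable.aestronglyMeasurable
        have := hBm.measurable
        fun_prop
      · filter_upwards with x
        rw [Real.norm_of_nonneg (mul_nonneg (mul_nonneg (hB0 x) (Real.exp_pos _).le) (Real.exp_pos _).le), mul_assoc, ← Real.exp_add]
        refine (mul_le_mul_of_nonneg_right (hC x) (Real.exp_pos _).le).trans (le_of_eq ?_)
        rw [mul_assoc, ← Real.exp_add]
        ring_nf)
    (c / ρ) p (fun z => -c / (ρ * (ρ + z)) + G (ρ + z) / (ρ + z)) (by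
      have hne : ∀ z ∈ {z : ℂ | 0 ≤ z.re}, (ρ : ℂ) + z ≠ 0 := by
        intro z hz h
        have := congrArg Complex.re h
        simp at this hz
        linarith
      apply ContinuousOn.add
      · apply ContinuousOn.div (by fun_prop) (by fun_prop)
        intro z hz
        exact mul_ne_zero (by exact_mod_cast hρ.ne') (hne z hz)
      · apply ContinuousOn.div _ (by fun_prop) hne
        apply hG.comp (by fun_prop)
        intro z hz
        simpa using hz)
    (by
      intro z hz
      have hz' : ρ < ((ρ : ℂ) + z).re := by simpa using hz
      have h1 := hLB (ρ + z) hz'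
      rw [hF _ hz'] at h1
      have hne : (ρ : ℂ) + z ≠ 0 := by
        intro h
        rw [h] at hz'
        simp at hz'
        linarith
      have hz0 : z ≠ 0 := by rintro rfl; simp at hz
      have hρ' : (ρ : ℂ) ≠ 0 := by exact_mod_cast hρ.ne'
      have e : ∀ x : ℝ, ((B x * Real.exp (-(ρ * x)) : ℝ) : ℂ) * Complex.exp (-(z * x)) = (B x : ℂ) * Complex.exp (-((ρ + z) * x)) := by
        intro x
        push_cast
        rw [mul_assoc, ← Complex.exp_add]
        ring_nf
      simp_rw [e]
      rw [h1]
      push_cast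
      rw [show (ρ : ℂ) + z - ρ = z by ring]
      field_simp
      ring)
  have hlog : Tendsto (fun N : ℕ => Real.log N) atTop atTop := Real.tendsto_log_atTop.comp tendsto_natCast_atTop_atTop
  refine (T.comp hlog).congr' ?_
  filter_upwards [eventually_ge_atTop 1] with N hN
  have hN' : (0:ℝ) < N := by exact_mod_cast hN
  simp only [Function.comp, hB, Real.exp_log hN', Nat.floor_natCast]
  rw [Real.exp_neg, mul_comm ρ, ← Real.rpow_def_of_pos hN']
  field_simp
end Taub5

section Comb
open Finset

open Classical in
def indP (P : Set ℕ) (n : ℕ) : ℝ := if n ∈ P then 1 else 0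

lemma prod_ne_zero_of (P : Set ℕ) (hP : ∀ n ∈ P, 2 ≤ n) {m : ℕ} (t : Fin m → ℕ) (ht : ∀ i, t i ∈ P) : ∏ i, t i ≠ 0 := by
  rw [Finset.prod_ne_zero_iff]
  intro i _
  have := hP _ (ht i)
  omega

open Classical in
def afEquiv (P : Set ℕ) (hP : ∀ n ∈ P, 2 ≤ n) (m n : ℕ) :
    {t : Fin (m + 1) → ℕ // (∀ i, t i ∈ P) ∧ ∏ i, t i = n} ≃
    Σ x : {x : ℕ × ℕ // x ∈ n.divisorsAntidiagonal.filter (fun x => x.1 ∈ P)},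
      {t : Fin m → ℕ // (∀ i, t i ∈ P) ∧ ∏ i, t i = x.1.2} where
  toFun t := ⟨⟨(t.1 0, ∏ i : Fin m, t.1 i.succ), by
      obtain ⟨t, ht, h⟩ := t
      rw [Finset.mem_filter, Nat.mem_divisorsAntidiagonal]
      refine ⟨⟨?_, ?_⟩, ht 0⟩
      · exact (Fin.prod_univ_succ t).symm.trans h
      · rw [← h]; exact prod_ne_zero_of P hP t ht⟩, ⟨fun i => t.1 i.succ, fun i => t.2.1 _, rfl⟩⟩
  invFun y := ⟨Fin.cons y.1.1.1 y.2.1, by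
      obtain ⟨⟨⟨d, e⟩, hx⟩, ⟨t, ht, h⟩⟩ := y
      rw [Finset.mem_filter, Nat.mem_divisorsAntidiagonal] at hx
      simp only at hx h ⊢
      refine ⟨?_, ?_⟩
      · intro i
        refine Fin.cases ?_ (fun j => ?_) i
        · simpa using hx.2
        · simpa using ht j
      · rw [Fin.prod_univ_succ]
        simp [h, hx.1.1]⟩
  left_inv t := by
    apply Subtype.ext
    funext i
    refine Fin.cases ?_ (fun j => ?_) i <;> simp
  right_inv y := by
    obtain ⟨⟨⟨d, e⟩, hx⟩, ⟨t, ht, h⟩⟩ := y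
    simp only at h
    subst h
    simp
    exact HEq.rfl

lemma af_finite (P : Set ℕ) (hP : ∀ n ∈ P, 2 ≤ n) (m : ℕ) : ∀ n, Finite {t : Fin m → ℕ // (∀ i, t i ∈ P) ∧ ∏ i, t i = n} := by
  induction m with
  | zero => intro n; infer_instance
  | succ m ih =>
    intro n
    have : ∀ n, Finite {t : Fin m → ℕ // (∀ i, t i ∈ P) ∧ ∏ i, t i = n} := ih
    exact Finite.of_equiv _ (afEquiv P hP m n).symm

lemma af_zero (P : Set ℕ) (n : ℕ) : af P 0 n = if n = 1 then 1 else 0 := by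
  unfold af
  split_ifs with h
  · subst h
    have : Unique {t : Fin 0 → ℕ // (∀ i, t i ∈ P) ∧ ∏ i, t i = 1} := ⟨⟨⟨Fin.elim0, by simp⟩⟩, fun t => Subtype.ext (Subsingleton.elim _ _)⟩
    exact Nat.card_unique
  · have : IsEmpty {t : Fin 0 → ℕ // (∀ i, t i ∈ P) ∧ ∏ i, t i = n} := ⟨fun t => h (by simpa using t.2.2.symm)⟩
    exact Nat.card_of_isEmpty

lemma af_succ (P : Set ℕ) (hP : ∀ n ∈ P, 2 ≤ n) (m n : ℕ) :
    (af P (m + 1) n : ℝ) = ∑ x ∈ n.divisorsAntidiagonal, indP P x.1 * af P m x.2 := by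
  classical
  have : ∀ n, Finite {t : Fin m → ℕ // (∀ i, t i ∈ P) ∧ ∏ i, t i = n} := af_finite P hP m
  unfold af
  rw [Nat.card_congr (afEquiv P hP m n), Nat.card_sigma]
  push_cast
  rw [Finset.sum_coe_sort (n.divisorsAntidiagonal.filter (fun x => x.1 ∈ P)) (fun x => (Nat.card {t : Fin m → ℕ // (∀ i, t i ∈ P) ∧ ∏ i, t i = x.2} : ℝ)), Finset.sum_filter]
  apply Finset.sum_congr rfl
  intro x _
  unfold indP
  split_ifs <;> simp

lemma af_eq_zero (P : Set ℕ) (hP : ∀ n ∈ P, 2 ≤ n) (m n : ℕ) (h : n ≤ m) : af P m n = 0 := by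
  unfold af
  have : IsEmpty {t : Fin m → ℕ // (∀ i, t i ∈ P) ∧ ∏ i, t i = n} := ⟨fun t => by
    obtain ⟨t, ht, hn⟩ := t
    have h1 : ∏ i : Fin m, 2 ≤ ∏ i, t i := Finset.prod_le_prod' (fun i _ => hP _ (ht i))
    simp only [Finset.prod_const, Finset.card_univ, Fintype.card_fin] at h1
    have := Nat.lt_two_pow_self (n := m)
    omega⟩
  exact Nat.card_of_isEmpty

lemma bCoef_summable (P : Set ℕ) (hP : ∀ n ∈ P, 2 ≤ n) (g : ℕ → ℝ) (n : ℕ) :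
    Summable (fun m => (af P m n : ℝ) * g m) := by
  apply summable_of_ne_finset_zero (s := Finset.range n)
  intro m hm
  rw [af_eq_zero P hP m n (by simpa using hm)]
  simp

lemma aTot_eq (P : Set ℕ) (μ : ℝ) (n : ℕ) : aTot P n = bCoef P μ 0 n := by
  simp [aTot, bCoef]

lemma bCoef_zero_right (P : Set ℕ) (hP : ∀ n ∈ P, 2 ≤ n) (μ : ℝ) (k : ℕ) : bCoef P μ k 0 = 0 := by
  unfold bCoef
  simp [af_eq_zero P hP]

lemma bCoef_rec (P : Set ℕ) (hP : ∀ n ∈ P, 2 ≤ n) (μ : ℝ) (k n : ℕ) :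
    bCoef P μ k n = (if n = 1 then (if k = 0 then 1 else 0) else 0) +
      ∑ i ∈ range (k + 1), (k.choose i : ℝ) * ∑ x ∈ n.divisorsAntidiagonal,
        (indP P x.1 * (1 - μ * Real.log x.1) ^ i) * bCoef P μ (k - i) x.2 := by
  conv_lhs => unfold bCoef
  rw [(bCoef_summable P hP _ n).tsum_eq_zero_add]
  congr 1
  · rw [af_zero]
    split_ifs with h1 h2
    · simp [h2]
    · subst h1; simp [h2]
    · simp
  · have e : ∀ m : ℕ, (af P (m + 1) n : ℝ) * (((m + 1 : ℕ) : ℝ) - μ * Real.log n) ^ k =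
      ∑ x ∈ n.divisorsAntidiagonal, (af P m x.2 : ℝ) * (indP P x.1 * ((1 - μ * Real.log x.1) + (m - μ * Real.log x.2)) ^ k) := by
      intro m
      rw [af_succ P hP, Finset.sum_mul]
      apply Finset.sum_congr rfl
      intro x hx
      rw [Nat.mem_divisorsAntidiagonal] at hx
      have h1 : (x.1 : ℝ) ≠ 0 := by
        intro h; apply hx.2; rw [← hx.1]; simp at h; simp [h]
      have h2 : (x.2 : ℝ) ≠ 0 := by
        intro h; apply hx.2; rw [← hx.1]; simp at h; simp [h]
      rw [← hx.1]
      push_cast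
      rw [Real.log_mul h1 h2]
      ring
    simp_rw [e]
    rw [Summable.tsum_finsetSum (fun x _ => bCoef_summable P hP _ _)]
    simp_rw [Finset.mul_sum]
    rw [Finset.sum_comm]
    apply Finset.sum_congr rfl
    intro x _
    simp_rw [add_pow, Finset.mul_sum]
    rw [Summable.tsum_finsetSum (fun i _ => bCoef_summable P hP _ _)]
    apply Finset.sum_congr rfl
    intro i _
    unfold bCoef
    rw [← tsum_mul_left, ← tsum_mul_left]
    apply tsum_congr
    intro m
    ring

lemma indP_nonneg (P : Set ℕ) (n : ℕ) : 0 ≤ indP P n := by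
  unfold indP; split_ifs <;> norm_num

lemma bCoef_nonneg_even (P : Set ℕ) (μ : ℝ) (k n : ℕ) (hk : Even k) : 0 ≤ bCoef P μ k n :=
  tsum_nonneg (fun m => mul_nonneg (by positivity) (hk.pow_nonneg _))

lemma bCoef_neg_nonneg (P : Set ℕ) (μ : ℝ) (hμ : 0 ≤ μ) (k n : ℕ) : 0 ≤ bCoef P (-μ) k n := by
  refine tsum_nonneg (fun m => mul_nonneg (by positivity) (pow_nonneg ?_ _))
  have := mul_nonneg hμ (Real.log_natCast_nonneg n)
  have : (0:ℝ) ≤ m := by positivity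
  linarith

lemma bCoef_abs_le (P : Set ℕ) (hP : ∀ n ∈ P, 2 ≤ n) (μ : ℝ) (hμ : 0 ≤ μ) (k n : ℕ) :
    |bCoef P μ k n| ≤ bCoef P (-μ) k n := by
  unfold bCoef
  rw [← Real.norm_eq_abs]
  refine (norm_tsum_le_tsum_norm (bCoef_summable P hP _ _).norm).trans ?_
  refine Summable.tsum_le_tsum ?_ (bCoef_summable P hP _ _).norm (bCoef_summable P hP _ _)
  intro m
  rw [norm_mul, norm_pow, Real.norm_of_nonneg (by positivity : (0:ℝ) ≤ af P m n)]
  refine mul_le_mul_of_nonneg_left (pow_le_pow_left₀ (norm_nonneg _) ?_ _) (by positivity)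
  have h1 := mul_nonneg hμ (Real.log_natCast_nonneg n)
  have h2 : (0:ℝ) ≤ m := by positivity
  rw [Real.norm_eq_abs, abs_le]
  constructor <;> linarith
end Comb

section DS
open Finset Topology

/-- weights `1_P(n) (1 - μ log n)^i` -/
def fP (P : Set ℕ) (μ : ℝ) (i n : ℕ) : ℝ := indP P n * (1 - μ * Real.log n) ^ i

lemma indP_zero (P : Set ℕ) (hP : ∀ n ∈ P, 2 ≤ n) {n : ℕ} (hn : n < 2) : indP P n = 0 := by
  unfold indP
  rw [if_neg (fun h => by have := hP n h; omega)]

lemma indP_tsum (P : Set ℕ) (g : ℕ → ℝ) : ∑' n : P, g n = ∑' n : ℕ, indP P n * g n := by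
  rw [tsum_subtype P g]
  apply tsum_congr
  intro n
  unfold indP Set.indicator
  split_ifs <;> simp

lemma indP_summable (P : Set ℕ) (g : ℕ → ℝ) : Summable (fun n : P => g n) ↔ Summable (fun n : ℕ => indP P n * g n) := by
  have : (fun n : P => g n) = g ∘ ((↑) : P → ℕ) := rfl
  rw [this, summable_subtype_iff_indicator]
  apply summable_congr
  intro n
  unfold indP Set.indicator
  split_ifs <;> simp

lemma exists_r (P : Set ℕ) (ρ : ℝ) (hρκ : kappa P < (ρ : EReal)) :
    ∃ r : ℝ, r < ρ ∧ Summable (fun n : ℕ => indP P n * (n : ℝ) ^ (-r)) := by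
  unfold kappa at hρκ
  obtain ⟨x, ⟨r, rfl, hr⟩, h⟩ := sInf_lt_iff.mp hρκ
  refine ⟨r, by exact_mod_cast h, ?_⟩
  exact (indP_summable P (fun n => (n:ℝ) ^ (-r))).mp hr

lemma log_bound (A : ℝ) (hA : 0 ≤ A) (i : ℕ) (δ : ℝ) (hδ : 0 < δ) :
    ∃ C : ℝ, 0 ≤ C ∧ ∀ n : ℕ, 1 ≤ n → (1 + A * Real.log n) ^ i ≤ C * (n : ℝ) ^ δ := by
  set ε : ℝ := δ / (i + 1) with hε
  have hε0 : 0 < ε := by positivity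
  refine ⟨(1 + A / ε) ^ i, by positivity, ?_⟩
  intro n hn
  have hn1 : (1:ℝ) ≤ n := by exact_mod_cast hn
  have h0 : 0 ≤ Real.log n := Real.log_natCast_nonneg n
  have h1 := Real.log_le_rpow_div (x := (n:ℝ)) (by positivity) hε0
  have h2 : (1:ℝ) ≤ (n:ℝ) ^ ε := Real.one_le_rpow hn1 hε0.le
  have h3 : 1 + A * Real.log n ≤ (1 + A / ε) * (n:ℝ) ^ ε := by
    have := mul_le_mul_of_nonneg_left h1 hA
    calc 1 + A * Real.log n ≤ (n:ℝ) ^ ε + A * ((n:ℝ) ^ ε / ε) := by linarith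
      _ = _ := by ring
  calc (1 + A * Real.log n) ^ i ≤ ((1 + A / ε) * (n:ℝ) ^ ε) ^ i := pow_le_pow_left₀ (by positivity) h3 i
    _ = (1 + A / ε) ^ i * (n:ℝ) ^ (ε * i) := by
      rw [mul_pow, ← Real.rpow_natCast ((n:ℝ) ^ ε), ← Real.rpow_mul (by positivity)]
    _ ≤ _ := by
      apply mul_le_mul_of_nonneg_left _ (by positivity)
      apply Real.rpow_le_rpow_of_exponent_le hn1
      rw [hε, div_mul_eq_mul_div, div_le_iff₀ (by positivity)]
      nlinarith

lemma summ_gen (P : Set ℕ) (hP : ∀ n ∈ P, 2 ≤ n) (r : ℝ) (hr : Summable (fun n : ℕ => indP P n * (n : ℝ) ^ (-r)))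
    (x : ℝ) (hx : r < x) (A : ℝ) (hA : 0 ≤ A) (i : ℕ) (g : ℕ → ℝ) (hg : ∀ n : ℕ, 1 ≤ n → |g n| ≤ (1 + A * Real.log n) ^ i) :
    Summable (fun n : ℕ => indP P n * g n * (n : ℝ) ^ (-x)) := by
  obtain ⟨C, hC0, hC⟩ := log_bound A hA i (x - r) (by linarith)
  apply Summable.of_norm_bounded (hr.mul_left C)
  intro n
  rcases Nat.lt_or_ge n 2 with hn | hn
  · simp [indP_zero P hP hn]
  have hn0 : (0:ℝ) < n := by positivity
  rw [norm_mul, norm_mul, Real.norm_of_nonneg (indP_nonneg P n), Real.norm_of_nonneg (by positivity : (0:ℝ) ≤ (n:ℝ) ^ (-x)), Real.norm_eq_abs]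
  have h1 := (hg n (by omega)).trans (hC n (by omega))
  have h2 : (n:ℝ) ^ (-r) = (n:ℝ) ^ (x - r) * (n:ℝ) ^ (-x) := by
    rw [← Real.rpow_add hn0]; ring_nf
  calc indP P n * |g n| * (n:ℝ) ^ (-x) ≤ indP P n * (C * (n:ℝ) ^ (x - r)) * (n:ℝ) ^ (-x) := by
        apply mul_le_mul_of_nonneg_right _ (by positivity)
        exact mul_le_mul_of_nonneg_left h1 (indP_nonneg P n)
    _ = _ := by rw [h2]; ring

lemma abs_one_sub_le (μ : ℝ) (i n : ℕ) : |(1 - μ * Real.log n) ^ i| ≤ (1 + |μ| * Real.log n) ^ i := by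
  rw [abs_pow]
  apply pow_le_pow_left₀ (abs_nonneg _)
  have h0 : 0 ≤ Real.log n := Real.log_natCast_nonneg n
  calc |1 - μ * Real.log n| ≤ |1| + |μ * Real.log n| := abs_sub _ _
    _ = _ := by rw [abs_one, abs_mul, abs_of_nonneg h0]

lemma summ_fP (P : Set ℕ) (hP : ∀ n ∈ P, 2 ≤ n) (r : ℝ) (hr : Summable (fun n : ℕ => indP P n * (n : ℝ) ^ (-r)))
    (x : ℝ) (hx : r < x) (μ : ℝ) (i : ℕ) : Summable (fun n : ℕ => fP P μ i n * (n : ℝ) ^ (-x)) :=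
  summ_gen P hP r hr x hx |μ| (abs_nonneg _) i _ (fun n _ => abs_one_sub_le μ i n)

lemma term_eq (f : ℕ → ℝ) (x : ℝ) (n : ℕ) (h : f 0 = 0) : LSeries.term (fun n => (f n : ℂ)) (x : ℂ) n = ((f n * (n:ℝ) ^ (-x) : ℝ) : ℂ) := by
  rw [LSeries.term_def]
  split_ifs with hn
  · subst hn; simp [h]
  · rw [Real.rpow_neg (by positivity)]
    push_cast
    rw [Complex.ofReal_cpow (by positivity)]
    simp [div_eq_mul_inv]

lemma LSeries_real (f : ℕ → ℝ) (x : ℝ) (h : f 0 = 0) : LSeries (fun n => (f n : ℂ)) x = ((∑' n, f n * (n:ℝ) ^ (-x) : ℝ) : ℂ) := by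
  rw [LSeries, Complex.ofReal_tsum]
  exact tsum_congr (fun n => term_eq f x n h)

lemma LSS_iff (f : ℕ → ℝ) (h : f 0 = 0) (s : ℂ) : LSeriesSummable (fun n => (f n : ℂ)) s ↔ Summable (fun n => f n * (n:ℝ) ^ (-s.re)) := by
  rw [LSeriesSummable_iff_of_re_eq_re (s' := (s.re : ℂ)) (by simp), LSeriesSummable]
  rw [← Complex.summable_ofReal]
  exact summable_congr (fun n => term_eq f s.re n h)

lemma fP_zero (P : Set ℕ) (hP : ∀ n ∈ P, 2 ≤ n) (μ : ℝ) (i : ℕ) : fP P μ i 0 = 0 := by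
  simp [fP, indP_zero P hP]

lemma fP_LSS (P : Set ℕ) (hP : ∀ n ∈ P, 2 ≤ n) (r : ℝ) (hr : Summable (fun n : ℕ => indP P n * (n : ℝ) ^ (-r)))
    (μ : ℝ) (i : ℕ) (s : ℂ) (hs : r < s.re) : LSeriesSummable (fun n => (fP P μ i n : ℂ)) s :=
  (LSS_iff _ (fP_zero P hP μ i) s).mpr (summ_fP P hP r hr _ hs μ i)

lemma fP_absc (P : Set ℕ) (hP : ∀ n ∈ P, 2 ≤ n) (r : ℝ) (hr : Summable (fun n : ℕ => indP P n * (n : ℝ) ^ (-r)))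
    (μ : ℝ) (i : ℕ) : LSeries.abscissaOfAbsConv (fun n => (fP P μ i n : ℂ)) ≤ r :=
  LSeries.abscissaOfAbsConv_le_of_forall_lt_LSeriesSummable (fun y hy => fP_LSS P hP r hr μ i y (by simpa using hy))

lemma fP_diff (P : Set ℕ) (hP : ∀ n ∈ P, 2 ≤ n) (r : ℝ) (hr : Summable (fun n : ℕ => indP P n * (n : ℝ) ^ (-r)))
    (μ : ℝ) (i : ℕ) : DifferentiableOn ℂ (LSeries (fun n => (fP P μ i n : ℂ))) {s | r < s.re} := by
  apply (LSeries_differentiableOn _).mono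
  intro s hs
  exact lt_of_le_of_lt (fP_absc P hP r hr μ i) (by exact_mod_cast hs)

/-- real facts at ρ -/
lemma vals (P : Set ℕ) (hP : ∀ n ∈ P, 2 ≤ n) (hP2 : P.Nontrivial) (r ρ : ℝ) (hrρ : r < ρ)
    (hr : Summable (fun n : ℕ => indP P n * (n : ℝ) ^ (-r))) (hρ1 : Pval P ρ = 1)
    (μ σ : ℝ) (hμ : μ = -1 / Pderiv1 P ρ)
    (hσ : σ ^ 2 = μ ^ 3 * Pderiv2 P ρ - μ) :
    0 < μ ∧ σ ^ 2 ≠ 0 ∧ LSeries (fun n => (fP P μ 0 n : ℂ)) ρ = 1 ∧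
    LSeries (fun n => (fP P μ 1 n : ℂ)) ρ = 0 ∧ μ * LSeries (fun n => (fP P μ 2 n : ℂ)) ρ = σ ^ 2 ∧
    deriv (LSeries (fun n => (fP P μ 0 n : ℂ))) ρ = - 1 / μ := by
  have s0 : Summable (fun n : ℕ => indP P n * 1 * (n : ℝ) ^ (-ρ)) := summ_gen P hP r hr ρ hrρ 0 le_rfl 0 (fun _ => 1) (by simp)
  have hlog0 : ∀ n : ℕ, 0 ≤ Real.log n := fun n => Real.log_natCast_nonneg n
  have s1 : Summable (fun n : ℕ => indP P n * Real.log n * (n : ℝ) ^ (-ρ)) :=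
    summ_gen P hP r hr ρ hrρ 1 zero_le_one 1 _ (by
      intro n _; rw [abs_of_nonneg (hlog0 n)]; linarith)
  have s2 : Summable (fun n : ℕ => indP P n * Real.log n ^ 2 * (n : ℝ) ^ (-ρ)) :=
    summ_gen P hP r hr ρ hrρ 1 zero_le_one 2 _ (by
      intro n _; rw [abs_of_nonneg (pow_nonneg (hlog0 n) _)]; nlinarith [hlog0 n])
  have v0 : ∑' n : ℕ, indP P n * 1 * (n : ℝ) ^ (-ρ) = 1 := by
    rw [Pval, indP_tsum P (fun n => (n:ℝ) ^ (-ρ))] at hρ1; simpa only [mul_one] using hρ1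
  have v1 : ∑' n : ℕ, indP P n * Real.log n * (n : ℝ) ^ (-ρ) = -Pderiv1 P ρ := by
    rw [Pderiv1, indP_tsum P (fun n => (n:ℝ) ^ (-ρ) * Real.log n), neg_neg]
    exact tsum_congr (fun n => by ring)
  have v2 : ∑' n : ℕ, indP P n * Real.log n ^ 2 * (n : ℝ) ^ (-ρ) = Pderiv2 P ρ := by
    rw [Pderiv2, indP_tsum P (fun n => (n:ℝ) ^ (-ρ) * Real.log n ^ 2)]
    exact tsum_congr (fun n => by ring)
  have ind1 : ∀ n ∈ P, indP P n = 1 := fun n hn => by unfold indP; rw [if_pos hn]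
  have hpos : 0 < -Pderiv1 P ρ := by
    rw [← v1]
    obtain ⟨n, hn⟩ := hP2.nonempty
    have h2 := hP n hn
    refine s1.tsum_pos (fun m => mul_nonneg (mul_nonneg (indP_nonneg P m) (hlog0 m)) (by positivity)) n ?_
    rw [ind1 n hn]
    have : 0 < Real.log n := Real.log_pos (by exact_mod_cast h2)
    have : (0:ℝ) < n := by positivity
    positivity
  have hne : Pderiv1 P ρ ≠ 0 := by linarith
  have hμ0 : 0 < μ := by
    rw [hμ, ← neg_div_neg_eq]; simpa using hpos
  have hmu : μ * Pderiv1 P ρ = -1 := by rw [hμ]; field_simp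
  have f1 : ∑' n : ℕ, fP P μ 1 n * (n:ℝ) ^ (-ρ) = 0 := by
    have : ∀ n : ℕ, fP P μ 1 n * (n:ℝ) ^ (-ρ) = indP P n * 1 * (n : ℝ) ^ (-ρ) - μ * (indP P n * Real.log n * (n : ℝ) ^ (-ρ)) := by
      intro n; unfold fP; ring
    simp_rw [this]
    rw [s0.tsum_sub (s1.mul_left μ), tsum_mul_left, v0, v1]
    linarith
  have f2 : ∑' n : ℕ, fP P μ 2 n * (n:ℝ) ^ (-ρ) = μ ^ 2 * Pderiv2 P ρ - 1 := by
    have : ∀ n : ℕ, fP P μ 2 n * (n:ℝ) ^ (-ρ) = (indP P n * 1 * (n : ℝ) ^ (-ρ) - (2 * μ) * (indP P n * Real.log n * (n : ℝ) ^ (-ρ))) + μ ^ 2 * (indP P n * Real.log n ^ 2 * (n : ℝ) ^ (-ρ)) := by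
      intro n; unfold fP; ring
    simp_rw [this]
    rw [(s0.sub (s1.mul_left _)).tsum_add (s2.mul_left _), s0.tsum_sub (s1.mul_left _), tsum_mul_left, tsum_mul_left, v0, v1, v2]
    linarith
  have f2pos : 0 < ∑' n : ℕ, fP P μ 2 n * (n:ℝ) ^ (-ρ) := by
    have sf := summ_fP P hP r hr ρ hrρ μ 2
    have hex : ∃ n ∈ P, 1 - μ * Real.log n ≠ 0 := by
      by_contra! hcon
      obtain ⟨a, ha, b, hb, hab⟩ := hP2
      have h1 := hcon a ha
      have h2 := hcon b hb
      have h3 : Real.log a = Real.log b := by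
        apply mul_left_cancel₀ hμ0.ne'; linarith
      have ha2 := hP a ha
      have hb2 := hP b hb
      have := Real.log_injOn_pos (by simp; omega : (a:ℝ) ∈ Set.Ioi 0) (by simp; omega : (b:ℝ) ∈ Set.Ioi 0) h3
      exact hab (by exact_mod_cast this)
    obtain ⟨n, hn, hn0⟩ := hex
    refine sf.tsum_pos (fun m => mul_nonneg (mul_nonneg (indP_nonneg P m) (sq_nonneg _)) (by positivity)) n ?_
    unfold fP
    rw [ind1 n hn]
    have h2 := hP n hn
    have : (0:ℝ) < n := by positivity
    positivity
  have hs : σ ^ 2 = μ * ∑' n : ℕ, fP P μ 2 n * (n:ℝ) ^ (-ρ) := by rw [f2, hσ]; ring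
  refine ⟨hμ0, ?_, ?_, ?_, ?_, ?_⟩
  · rw [hs]; positivity
  · rw [LSeries_real _ _ (fP_zero P hP μ 0)]
    rw [← Complex.ofReal_one, ← v0]
    simp [fP]
  · rw [LSeries_real _ _ (fP_zero P hP μ 1), f1]; simp
  · rw [LSeries_real _ _ (fP_zero P hP μ 2)]
    exact_mod_cast hs.symm
  · rw [LSeries_deriv (lt_of_le_of_lt (fP_absc P hP r hr μ 0) (by exact_mod_cast hrρ))]
    have : LSeries.logMul (fun n => (fP P μ 0 n : ℂ)) = fun n => ((indP P n * Real.log n : ℝ) : ℂ) := by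
      funext n
      simp [LSeries.logMul, fP, Complex.natCast_log, mul_comm]
    rw [this, LSeries_real (fun n => indP P n * Real.log n) _ (by simp), v1]
    have : (Pderiv1 P ρ) = -1 / μ := by field_simp; linarith
    rw [this]; push_cast; ring
end DS

section NV
open Finset Topology

lemma power_struct (t : ℝ) (ht : 0 < t) (P : Set ℕ) (hP : ∀ n ∈ P, 2 ≤ n) (hne : P.Nonempty)
    (h : ∀ n ∈ P, ∃ k : ℕ, t * Real.log n = k) : ∃ d : ℕ, 2 ≤ d ∧ P ⊆ {n : ℕ | ∃ k : ℕ, 1 ≤ k ∧ n = d ^ k} := by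
  classical
  have hex : ∃ n : ℕ, 2 ≤ n ∧ ∃ k : ℕ, t * Real.log n = k := by
    obtain ⟨n, hn⟩ := hne
    exact ⟨n, hP n hn, h n hn⟩
  set d := Nat.find hex with hd
  obtain ⟨hd2, kd, hkd⟩ := Nat.find_spec hex
  rw [← hd] at hd2 hkd
  have hdpos : 0 < Real.log d := Real.log_pos (by exact_mod_cast hd2)
  have hkd1 : kd ≠ 0 := by
    rintro rfl
    have := mul_pos ht hdpos
    rw [hkd] at this; simp at this
  have key : ∀ n : ℕ, 2 ≤ n → (∃ k : ℕ, t * Real.log n = k) → ∃ k : ℕ, 1 ≤ k ∧ n = d ^ k := by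
    intro n
    induction n using Nat.strong_induction_on with
    | _ n ih =>
    intro hn2 hk
    obtain ⟨kn, hkn⟩ := hk
    have hdn : d ≤ n := Nat.find_min' hex ⟨hn2, kn, hkn⟩
    have hd0 : (0:ℝ) < d := by positivity
    have hn0 : (0:ℝ) < n := by positivity
    have hle : kd ≤ kn := by
      have : (kd : ℝ) ≤ kn := by
        rw [← hkd, ← hkn]
        exact mul_le_mul_of_nonneg_left (Real.log_le_log hd0 (by exact_mod_cast hdn)) ht.le
      exact_mod_cast this
    have hpow : n ^ kd = d ^ kn := by
      have h1 : (kd : ℝ) * Real.log n = kn * Real.log d := by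
        rw [← hkd, ← hkn]; ring
      rw [← Real.log_pow, ← Real.log_pow] at h1
      have := Real.log_injOn_pos (by simp; positivity : (n:ℝ) ^ kd ∈ Set.Ioi 0) (by simp; positivity : (d:ℝ) ^ kn ∈ Set.Ioi 0) h1
      exact_mod_cast this
    have hdvd : d ∣ n := by
      rw [← Nat.pow_dvd_pow_iff hkd1, hpow]
      exact pow_dvd_pow d hle
    obtain ⟨q, hq⟩ := hdvd
    rcases Nat.lt_or_ge q 2 with hq2 | hq2
    · have : q = 1 := by
        interval_cases q
        · omega
        · rfl
      exact ⟨1, le_rfl, by rw [hq, this]; simp⟩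
    · have hq0 : (0:ℝ) < q := by positivity
      obtain ⟨k, hk1, hk⟩ := ih q (by rw [hq]; nlinarith) hq2 ⟨kn - kd, by
        rw [Nat.cast_sub hle, ← hkd, ← hkn, hq]
        push_cast
        rw [Real.log_mul hd0.ne' hq0.ne']; ring⟩
      exact ⟨k + 1, by omega, by rw [hq, hk]; ring⟩
  exact ⟨d, hd2, fun n hn => key n (hP n hn) (h n hn)⟩

lemma nonvanish (P : Set ℕ) (hP : ∀ n ∈ P, 2 ≤ n) (hP2 : P.Nontrivial) (r ρ : ℝ) (hrρ : r < ρ)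
    (hr : Summable (fun n : ℕ => indP P n * (n : ℝ) ^ (-r))) (μ : ℝ)
    (hone : LSeries (fun n => (fP P μ 0 n : ℂ)) ρ = 1)
    (hnp : ∀ d : ℕ, 2 ≤ d → ¬ P ⊆ {n : ℕ | ∃ k : ℕ, 1 ≤ k ∧ n = d ^ k})
    (s : ℂ) (hs : ρ ≤ s.re) (hne : s ≠ ρ) : LSeries (fun n => (fP P μ 0 n : ℂ)) s ≠ 1 := by
  intro h1
  have ind1 : ∀ n ∈ P, indP P n = 1 := fun n hn => by unfold indP; rw [if_pos hn]
  have S1 := (fP_LSS P hP r hr μ 0 s (by linarith)).hasSum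
  have S0 := (fP_LSS P hP r hr μ 0 ρ (by simpa using hrρ)).hasSum
  rw [← LSeries, h1] at S1
  rw [← LSeries, hone] at S0
  have S2 := Complex.hasSum_re (S0.sub S1)
  simp only [sub_self, Complex.zero_re] at S2
  have tn : ∀ n, (LSeries.term (fun n => (fP P μ 0 n : ℂ)) ρ n).re = indP P n * (n:ℝ) ^ (-ρ) := by
    intro n
    rw [term_eq _ _ _ (fP_zero P hP μ 0), Complex.ofReal_re]
    simp [fP]
  have tnorm : ∀ n, ‖LSeries.term (fun n => (fP P μ 0 n : ℂ)) s n‖ = indP P n * (n:ℝ) ^ (-s.re) := by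
    intro n
    rw [LSeries.norm_term_eq]
    split_ifs with hn
    · simp [hn, indP_zero P hP]
    · rw [Real.rpow_neg (by positivity)]
      simp [fP, abs_of_nonneg (indP_nonneg P n), div_eq_mul_inv]
  have hle : ∀ n : ℕ, indP P n * (n:ℝ) ^ (-s.re) ≤ indP P n * (n:ℝ) ^ (-ρ) := by
    intro n
    rcases Nat.lt_or_ge n 2 with hn | hn
    · simp [indP_zero P hP hn]
    · apply mul_le_mul_of_nonneg_left _ (indP_nonneg P n)
      apply Real.rpow_le_rpow_of_exponent_le
      · exact_mod_cast (by omega : 1 ≤ n)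
      · linarith
  have hz := (hasSum_zero_iff_of_nonneg (fun n => by
    rw [Complex.sub_re, tn, sub_nonneg]
    exact ((Complex.re_le_norm _).trans (le_of_eq (tnorm n))).trans (hle n))).mp S2
  have hre : ∀ n, (LSeries.term (fun n => (fP P μ 0 n : ℂ)) s n).re = indP P n * (n:ℝ) ^ (-ρ) := by
    intro n
    have := congrFun hz n
    simp only [Complex.sub_re, tn, Pi.zero_apply] at this
    linarith
  have heq : ∀ n, indP P n * (n:ℝ) ^ (-s.re) = indP P n * (n:ℝ) ^ (-ρ) := by
    intro n
    apply le_antisymm (hle n)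
    rw [← hre, ← tnorm]; exact Complex.re_le_norm _
  have hsρ : s.re = ρ := by
    obtain ⟨n, hn⟩ := hP2.nonempty
    have h2 := heq n
    have hn2 := hP n hn
    rw [ind1 n hn, one_mul, one_mul] at h2
    have h3 := (Real.rpow_right_inj (by positivity) (by exact_mod_cast (by omega : n ≠ 1))).mp h2
    linarith
  have him : s.im ≠ 0 := by
    intro h0
    apply hne
    apply Complex.ext <;> simp [hsρ, h0]
  have hterm : ∀ n ∈ P, ∃ k : ℤ, s.im * Real.log n = 2 * Real.pi * k := by
    intro n hn
    have hn2 := hP n hn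
    have hn0 : (n : ℂ) ≠ 0 := by exact_mod_cast (by omega : n ≠ 0)
    have e1 : LSeries.term (fun n => (fP P μ 0 n : ℂ)) s n = Complex.exp (-(Complex.log n * s)) := by
      rw [LSeries.term_def, if_neg (by omega), Complex.cpow_def_of_ne_zero hn0, Complex.exp_neg]
      simp [fP, ind1 n hn]
    have h3 := hre n
    have h4 := tnorm n
    rw [heq n] at h4
    rw [e1] at h3 h4
    have h5 : (Complex.exp (-(Complex.log n * s))).re = ‖Complex.exp (-(Complex.log n * s))‖ := by rw [h3, h4]
    rw [Complex.norm_exp, Complex.exp_re] at h5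
    have h6 : Real.cos (-(Complex.log n * s)).im = 1 := by
      apply mul_left_cancel₀ (Real.exp_pos (-(Complex.log n * s)).re).ne'
      rw [h5, mul_one]
    rw [Real.cos_eq_one_iff] at h6
    obtain ⟨k, hk⟩ := h6
    rw [← Complex.natCast_log, Complex.neg_im, Complex.im_ofReal_mul] at hk
    refine ⟨-k, ?_⟩
    push_cast
    linarith
  obtain ⟨d, hd2, hd⟩ := power_struct (|s.im| / (2 * Real.pi)) (by have := abs_pos.mpr him; positivity) P hP hP2.nonempty (by
    intro n hn
    obtain ⟨k, hk⟩ := hterm n hn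
    refine ⟨k.natAbs, ?_⟩
    have h7 := congrArg abs hk
    rw [abs_mul, abs_mul, abs_of_nonneg (Real.log_natCast_nonneg n), abs_of_pos (by positivity : 0 < 2 * Real.pi)] at h7
    rw [Nat.cast_natAbs, div_mul_eq_mul_div, h7]
    push_cast
    field_simp)
  exact hnp d hd2 hd

lemma lt_one_of_gt (P : Set ℕ) (hP : ∀ n ∈ P, 2 ≤ n) (hP2 : P.Nontrivial) (r ρ : ℝ) (hrρ : r < ρ)
    (hr : Summable (fun n : ℕ => indP P n * (n : ℝ) ^ (-r))) (hρ1 : Pval P ρ = 1) (x : ℝ) (hx : ρ < x) (μ : ℝ) :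
    ∑' n : ℕ, fP P μ 0 n * (n:ℝ) ^ (-x) < 1 := by
  have ind1 : ∀ n ∈ P, indP P n = 1 := fun n hn => by unfold indP; rw [if_pos hn]
  have e : ∑' n : ℕ, fP P μ 0 n * (n:ℝ) ^ (-ρ) = 1 := by
    rw [Pval, indP_tsum P (fun n => (n:ℝ) ^ (-ρ))] at hρ1
    simpa [fP] using hρ1
  rw [← e]
  obtain ⟨n, hn⟩ := hP2.nonempty
  have hn2 := hP n hn
  refine Summable.tsum_lt_tsum (i := n) ?_ ?_ (summ_fP P hP r hr x (by linarith) μ 0) (summ_fP P hP r hr ρ hrρ μ 0)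
  · intro m
    simp only [fP, pow_zero, mul_one]
    rcases Nat.lt_or_ge m 2 with hm | hm
    · simp [indP_zero P hP hm]
    · apply mul_le_mul_of_nonneg_left _ (indP_nonneg P m)
      apply Real.rpow_le_rpow_of_exponent_le
      · exact_mod_cast (by omega : 1 ≤ m)
      · linarith
  · simp only [fP, pow_zero, mul_one, ind1 n hn, one_mul]
    apply Real.rpow_lt_rpow_of_exponent_lt
    · exact_mod_cast (by omega : 1 < n)
    · linarith
end NV

section SM
open Finset Topology

lemma conv_le (u v : ℕ → ℝ) (hu : ∀ n, 0 ≤ u n) (hv : ∀ n, 0 ≤ v n) (N : ℕ) :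
    ∑ n ∈ range N, ∑ x ∈ n.divisorsAntidiagonal, u x.1 * v x.2 ≤ (∑ n ∈ range N, u n) * ∑ n ∈ range N, v n := by
  rw [Finset.sum_mul_sum, ← Finset.sum_product']
  calc ∑ n ∈ range N, ∑ x ∈ n.divisorsAntidiagonal, u x.1 * v x.2
      ≤ ∑ n ∈ range N, ∑ x ∈ (range N ×ˢ range N).filter (fun x => x.1 * x.2 = n), u x.1 * v x.2 := by
        apply Finset.sum_le_sum
        intro n hn
        apply Finset.sum_le_sum_of_subset_of_nonneg
        · intro x hx
          rw [Nat.mem_divisorsAntidiagonal] at hx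
          rw [Finset.mem_range] at hn
          have h1 : x.1 ≤ n := Nat.le_of_dvd (Nat.pos_of_ne_zero hx.2) ⟨x.2, hx.1.symm⟩
          have h2 : x.2 ≤ n := Nat.le_of_dvd (Nat.pos_of_ne_zero hx.2) ⟨x.1, by rw [← hx.1, mul_comm]⟩
          simp only [Finset.mem_filter, Finset.mem_product, Finset.mem_range]
          exact ⟨⟨by omega, by omega⟩, hx.1⟩
        · intro x _ _; exact mul_nonneg (hu _) (hv _)
    _ = ∑ x ∈ (range N ×ˢ range N).filter (fun x => x.1 * x.2 ∈ range N), u x.1 * v x.2 := by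
        rw [Finset.sum_fiberwise_eq_sum_filter]
    _ ≤ _ := by
        apply Finset.sum_le_sum_of_subset_of_nonneg (Finset.filter_subset _ _)
        intro x _ _; exact mul_nonneg (hu _) (hv _)

lemma fP_neg_nonneg (P : Set ℕ) (μ : ℝ) (hμ : 0 ≤ μ) (i n : ℕ) : 0 ≤ fP P (-μ) i n := by
  refine mul_nonneg (indP_nonneg P n) (pow_nonneg ?_ _)
  have := mul_nonneg hμ (Real.log_natCast_nonneg n)
  linarith

lemma bCoef_wrec (P : Set ℕ) (hP : ∀ n ∈ P, 2 ≤ n) (μ : ℝ) (k n : ℕ) (x : ℝ) :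
    bCoef P μ k n * (n:ℝ) ^ (-x) = (if n = 1 then (if k = 0 then 1 else 0) else 0) +
      ∑ i ∈ range (k + 1), (k.choose i : ℝ) * ∑ y ∈ n.divisorsAntidiagonal,
        (fP P μ i y.1 * (y.1:ℝ) ^ (-x)) * (bCoef P μ (k - i) y.2 * (y.2 : ℝ) ^ (-x)) := by
  rw [bCoef_rec P hP, add_mul, Finset.sum_mul]
  congr 1
  · split_ifs with h
    · subst h; simp
    · simp
    · simp
  · apply Finset.sum_congr rfl
    intro i _
    rw [mul_assoc, Finset.sum_mul]
    congr 1
    apply Finset.sum_congr rfl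
    intro y hy
    rw [Nat.mem_divisorsAntidiagonal] at hy
    rw [← hy.1]
    push_cast
    rw [Real.mul_rpow (by positivity) (by positivity)]
    unfold fP
    ring

lemma c_summ (P : Set ℕ) (hP : ∀ n ∈ P, 2 ≤ n) (hP2 : P.Nontrivial) (r ρ : ℝ) (hrρ : r < ρ)
    (hr : Summable (fun n : ℕ => indP P n * (n : ℝ) ^ (-r))) (hρ1 : Pval P ρ = 1) (x : ℝ) (hx : ρ < x) (μ : ℝ) (hμ : 0 ≤ μ)
    (k : ℕ) : Summable (fun n : ℕ => bCoef P (-μ) k n * (n:ℝ) ^ (-x)) := by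
  induction k using Nat.strong_induction_on with
  | _ k ih =>
  set u : ℕ → ℕ → ℝ := fun i n => fP P (-μ) i n * (n:ℝ) ^ (-x) with hu
  set v : ℕ → ℕ → ℝ := fun i n => bCoef P (-μ) i n * (n:ℝ) ^ (-x) with hv
  have hu0 : ∀ i n, 0 ≤ u i n := fun i n => mul_nonneg (fP_neg_nonneg P μ hμ i n) (by positivity)
  have hv0 : ∀ i n, 0 ≤ v i n := fun i n => mul_nonneg (bCoef_neg_nonneg P μ hμ i n) (by positivity)
  have us : ∀ i, Summable (u i) := fun i => summ_fP P hP r hr x (by linarith) (-μ) i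
  have hlt : ∑' n, u 0 n < 1 := lt_one_of_gt P hP hP2 r ρ hrρ hr hρ1 x hx (-μ)
  set D : ℝ := 1 + ∑ i ∈ range k, (k.choose (i + 1) : ℝ) * ((∑' n, u (i + 1) n) * ∑' n, v (k - (i + 1)) n) with hD
  apply summable_of_sum_range_le (c := D / (1 - ∑' n, u 0 n)) (hv0 k)
  intro N
  rw [le_div_iff₀ (by linarith)]
  have h1 : ∑ n ∈ range N, v k n ≤ 1 + ∑ i ∈ range (k + 1), (k.choose i : ℝ) * ((∑ n ∈ range N, u i n) * ∑ n ∈ range N, v (k - i) n) := by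
    have : ∀ n, v k n = _ := fun n => bCoef_wrec P hP (-μ) k n x
    simp_rw [this]
    rw [Finset.sum_add_distrib]
    apply add_le_add
    · rw [Finset.sum_ite_eq']
      split_ifs <;> norm_num
    · rw [Finset.sum_comm]
      apply Finset.sum_le_sum
      intro i _
      rw [← Finset.mul_sum]
      apply mul_le_mul_of_nonneg_left _ (by positivity)
      exact conv_le (u i) (v (k - i)) (hu0 i) (hv0 _) N
  rw [Finset.sum_range_succ'] at h1
  simp only [Nat.choose_zero_right, Nat.cast_one, one_mul, Nat.sub_zero] at h1
  have h2 : ∑ n ∈ range N, u 0 n ≤ ∑' n, u 0 n := (us 0).sum_le_tsum _ (fun n _ => hu0 0 n)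
  have h3 : ∑ i ∈ range k, (k.choose (i + 1) : ℝ) * ((∑ n ∈ range N, u (i + 1) n) * ∑ n ∈ range N, v (k - (i + 1)) n)
      ≤ ∑ i ∈ range k, (k.choose (i + 1) : ℝ) * ((∑' n, u (i + 1) n) * ∑' n, v (k - (i + 1)) n) := by
    apply Finset.sum_le_sum
    intro i hi
    rw [Finset.mem_range] at hi
    apply mul_le_mul_of_nonneg_left _ (by positivity)
    have vs := ih (k - (i + 1)) (by omega)
    apply mul_le_mul
    · exact (us _).sum_le_tsum _ (fun n _ => hu0 _ n)
    · exact vs.sum_le_tsum _ (fun n _ => hv0 _ n)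
    · exact Finset.sum_nonneg (fun n _ => hv0 _ n)
    · exact tsum_nonneg (fun n => hu0 _ n)
  have h4 : 0 ≤ ∑ n ∈ range N, v k n := Finset.sum_nonneg (fun n _ => hv0 _ n)
  have h5 := mul_le_mul_of_nonneg_right h2 h4
  rw [hD]
  linarith

lemma b_LSS (P : Set ℕ) (hP : ∀ n ∈ P, 2 ≤ n) (hP2 : P.Nontrivial) (r ρ : ℝ) (hrρ : r < ρ)
    (hr : Summable (fun n : ℕ => indP P n * (n : ℝ) ^ (-r))) (hρ1 : Pval P ρ = 1) (μ : ℝ) (hμ : 0 ≤ μ)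
    (k : ℕ) (s : ℂ) (hs : ρ < s.re) : LSeriesSummable (fun n => (bCoef P μ k n : ℂ)) s := by
  rw [LSS_iff _ (bCoef_zero_right P hP μ k)]
  apply Summable.of_norm_bounded (c_summ P hP hP2 r ρ hrρ hr hρ1 s.re hs μ hμ k)
  intro n
  rw [norm_mul, Real.norm_of_nonneg (by positivity : (0:ℝ) ≤ (n:ℝ) ^ (-s.re))]
  exact mul_le_mul_of_nonneg_right (bCoef_abs_le P hP μ hμ k n) (by positivity)

lemma b_feq (P : Set ℕ) (hP : ∀ n ∈ P, 2 ≤ n) (hP2 : P.Nontrivial) (r ρ : ℝ) (hrρ : r < ρ)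
    (hr : Summable (fun n : ℕ => indP P n * (n : ℝ) ^ (-r))) (hρ1 : Pval P ρ = 1) (μ : ℝ) (hμ : 0 ≤ μ)
    (k : ℕ) (s : ℂ) (hs : ρ < s.re) : LSeries (fun n => (bCoef P μ k n : ℂ)) s = (if k = 0 then 1 else 0) +
      ∑ i ∈ range (k + 1), (k.choose i : ℂ) * (LSeries (fun n => (fP P μ i n : ℂ)) s * LSeries (fun n => (bCoef P μ (k - i) n : ℂ)) s) := by
  have hb := fun k => b_LSS P hP hP2 r ρ hrρ hr hρ1 μ hμ k s hs
  have hf := fun i => fP_LSS P hP r hr μ i s (by linarith)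
  have e : (fun n => (bCoef P μ k n : ℂ)) = (if k = 0 then (1:ℂ) else 0) • LSeries.delta +
      ∑ i ∈ range (k + 1), (k.choose i : ℂ) • LSeries.convolution (fun n => (fP P μ i n : ℂ)) (fun n => (bCoef P μ (k - i) n : ℂ)) := by
    funext n
    rw [bCoef_rec P hP]
    simp only [Pi.add_apply, Finset.sum_apply, Pi.smul_apply, LSeries.convolution_def, smul_eq_mul, LSeries.delta]
    push_cast
    unfold fP
    congr 1
    · split_ifs <;> simp
    · push_cast; rfl
  have hd : LSeriesSummable LSeries.delta s := by
    refine (hasSum_ite_eq (1:ℕ) (1:ℂ)).summable.congr (fun n => ?_)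
    rw [LSeries.term_delta]
  have hc : ∀ i, LSeriesSummable ((k.choose i : ℂ) • LSeries.convolution (fun n => (fP P μ i n : ℂ)) (fun n => (bCoef P μ (k - i) n : ℂ))) s :=
    fun i => ((hf i).convolution (hb _)).smul _
  conv_lhs => rw [e]
  rw [LSeries_add (hd.smul _) (LSeriesSummable.sum (fun i _ => hc i)), LSeries_smul, LSeries_sum (fun i _ => hc i), LSeries_delta]
  congr 1
  · simp
  · apply Finset.sum_congr rfl
    intro i _
    rw [LSeries_smul, LSeries_convolution' (hf i) (hb _)]
end SM

section AN
open Finset Topology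

lemma analytic_ind (r ρ μ σ : ℝ) (hrρ : r < ρ) (hμ : μ ≠ 0) (Nf L : ℕ → ℂ → ℂ)
    (hN : ∀ i, DifferentiableOn ℂ (Nf i) {s | r < s.re})
    (hL : ∀ k s, ρ < s.re → L k s = (if k = 0 then 1 else 0) + ∑ i ∈ range (k + 1), (k.choose i : ℂ) * (Nf i s * L (k - i) s))
    (h0 : Nf 0 ρ = 1) (h1 : Nf 1 ρ = 0) (h2 : μ * Nf 2 ρ = σ ^ 2) (hd : deriv (Nf 0) ρ = -1 / μ)
    (hnv : ∀ s : ℂ, ρ ≤ s.re → s ≠ ρ → Nf 0 s ≠ 1) :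
    ∃ V : Set ℂ, IsOpen V ∧ {s : ℂ | ρ ≤ s.re} ⊆ V ∧ ∀ k, ∃ R : ℂ → ℂ, DifferentiableOn ℂ R V ∧
      (∀ s : ℂ, ρ < s.re → L k s = R s / (s - ρ) ^ (k / 2 + 1)) ∧
      (∀ p, k = 2 * p → R ρ = ((μ * σ ^ (2 * p) * (2 * p).factorial / 2 ^ p : ℝ) : ℂ)) := by
  have hU : IsOpen {s : ℂ | r < s.re} := isOpen_lt continuous_const Complex.continuous_re
  have hUn : {s : ℂ | r < s.re} ∈ 𝓝 (ρ : ℂ) := hU.mem_nhds (by simpa using hrρ)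
  have hμ' : (μ : ℂ) ≠ 0 := by exact_mod_cast hμ
  set D := dslope (Nf 0) ρ with hD
  set M := dslope (Nf 1) ρ with hM
  have dD : DifferentiableOn ℂ D {s | r < s.re} := (Complex.differentiableOn_dslope hUn).mpr (hN 0)
  have dM : DifferentiableOn ℂ M {s | r < s.re} := (Complex.differentiableOn_dslope hUn).mpr (hN 1)
  have eD : ∀ s, (s - ρ) * D s = Nf 0 s - 1 := by
    intro s
    have := sub_smul_dslope (Nf 0) (ρ : ℂ) s
    rw [h0] at this; exact this
  have eM : ∀ s, Nf 1 s = (s - ρ) * M s := by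
    intro s
    have := sub_smul_dslope (Nf 1) (ρ : ℂ) s
    rw [h1, sub_zero] at this; exact this.symm
  have Dρ : D ρ = -1 / μ := by rw [hD, dslope_same, hd]
  set V : Set ℂ := {s | r < s.re} ∩ D ⁻¹' {0}ᶜ with hV
  have hVo : IsOpen V := dD.continuousOn.isOpen_inter_preimage hU isOpen_compl_singleton
  have hVs : {s : ℂ | ρ ≤ s.re} ⊆ V := by
    intro s hs
    simp only [Set.mem_ofPred_eq] at hs
    refine ⟨by simp only [Set.mem_ofPred_eq]; linarith, ?_⟩
    simp only [Set.mem_preimage, Set.mem_compl_iff, Set.mem_singleton_iff]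
    by_cases h : s = ρ
    · rw [h, Dρ]
      exact div_ne_zero (by simp) hμ'
    · intro h3
      apply hnv s hs h
      have := eD s
      rw [h3, mul_zero] at this
      linear_combination -this
  have hVU : V ⊆ {s | r < s.re} := Set.inter_subset_left
  set E : ℂ → ℂ := fun s => -1 / D s with hE
  have dE : DifferentiableOn ℂ E V := by
    apply DifferentiableOn.div (by fun_prop) (dD.mono hVU)
    intro s hs
    exact hs.2
  have Eρ : E ρ = μ := by simp only [hE]; rw [Dρ]; field_simp
  have hED : ∀ s : ℂ, ρ < s.re → E s * D s = -1 := by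
    intro s hs
    have : D s ≠ 0 := (hVs (le_of_lt hs : ρ ≤ s.re)).2
    simp only [hE]; field_simp
  clear hE
  clear_value E
  refine ⟨V, hVo, hVs, ?_⟩
  intro k
  induction k using Nat.strong_induction_on with
  | _ k ih =>
  rcases k with _ | k
  · refine ⟨E, dE, ?_, ?_⟩
    · intro s hs
      have hw : s - ρ ≠ 0 := by
        intro h
        have := congrArg Complex.re h
        simp at this; linarith
      have h3 := hL 0 s hs
      simp at h3
      have h4 := eD s
      have h5 := hED s hs
      simp only [Nat.zero_div, zero_add, pow_one]
      rw [eq_div_iff hw]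
      linear_combination (E s) * h3 - (E s * L 0 s) * h4 + ((s - ρ) * L 0 s) * h5
    · intro p hp
      have : p = 0 := by omega
      subst this
      rw [Eρ]; simp
  · choose! R dR eR vR using ih
    refine ⟨fun s => E s * ((k + 1 : ℂ) * M s * R k s * (s - ρ) ^ ((k + 1) / 2 - k / 2) +
      ∑ j ∈ range k, ((k + 1).choose (j + 2) : ℂ) * (Nf (j + 2) s * (R (k + 1 - (j + 2)) s * (s - ρ) ^ ((k + 1) / 2 - ((k + 1 - (j + 2)) / 2 + 1))))), ?_, ?_, ?_⟩
    · apply dE.mul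
      apply DifferentiableOn.add
      · exact (((differentiableOn_const _).mul (dM.mono hVU)).mul (dR k (by omega))).mul (by fun_prop)
      · apply DifferentiableOn.fun_sum
        intro j hj
        exact (differentiableOn_const _).mul (((hN _).mono hVU).mul ((dR _ (by omega)).mul (by fun_prop)))
    · intro s hs
      have hw : s - ρ ≠ 0 := by
        intro h
        have := congrArg Complex.re h
        simp at this; linarith
      have h3 := hL (k + 1) s hs
      rw [Finset.sum_range_succ', Finset.sum_range_succ'] at h3
      simp only [Nat.choose_zero_right, Nat.cast_one, one_mul, Nat.sub_zero, zero_add, Nat.choose_one_right, Nat.add_sub_cancel, if_neg (Nat.succ_ne_zero k), add_assoc, Nat.reduceAdd] at h3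
      have h4 := eD s
      have h5 := hED s hs
      rw [eM s] at h3
      set w : ℂ := s - ρ with hwd
      have t0 : w ^ ((k + 1) / 2) * (w * L k s) = R k s * w ^ ((k + 1) / 2 - k / 2) := by
        rw [eR k (by omega) s hs, ← hwd, pow_sub₀ w hw (by omega), pow_succ w (k / 2)]
        field_simp
      have t1 : w ^ ((k + 1) / 2) * ∑ j ∈ range k, ((k + 1).choose (j + 2) : ℂ) * (Nf (j + 2) s * L (k + 1 - (j + 2)) s) =
        ∑ j ∈ range k, ((k + 1).choose (j + 2) : ℂ) * (Nf (j + 2) s * (R (k + 1 - (j + 2)) s * w ^ ((k + 1) / 2 - ((k + 1 - (j + 2)) / 2 + 1)))) := by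
        rw [Finset.mul_sum]
        apply Finset.sum_congr rfl
        intro j hj
        rw [Finset.mem_range] at hj
        rw [eR _ (by omega) s hs, ← hwd, pow_sub₀ w hw (by omega)]
        field_simp
      simp only [← hwd]
      rw [← t1, eq_div_iff (pow_ne_zero _ hw), pow_succ]
      rw [Nat.cast_add k 1, Nat.cast_one] at h3
      linear_combination (E s * w ^ ((k + 1) / 2)) * h3 - (E s * L (k + 1) s * w ^ ((k + 1) / 2)) * h4 + (w * L (k + 1) s * w ^ ((k + 1) / 2)) * h5 + (E s * (k + 1) * M s) * t0
    · intro p hp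
      obtain ⟨q, rfl⟩ : ∃ q, p = q + 1 := ⟨p - 1, by omega⟩
      have hk : k = 2 * q + 1 := by omega
      subst hk
      simp only [sub_self]
      rw [zero_pow (by omega), mul_zero, zero_add, Finset.sum_range_succ']
      rw [Finset.sum_eq_zero (fun j hj => by
        rw [Finset.mem_range] at hj
        rw [zero_pow (by omega)]; ring)]
      have e1 : 2 * q + 1 + 1 - (0 + 2) = 2 * q := by omega
      rw [e1, vR (2 * q) (by omega) q rfl, Eρ]
      have e2 : (2 * q + 1 + 1) / 2 - (2 * q / 2 + 1) = 0 := by omega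
      rw [e2, pow_zero, zero_add, zero_add, Nat.cast_choose_two]
      have e3 : (2 * (q + 1)).factorial = (2 * q + 2) * ((2 * q + 1) * (2 * q).factorial) := by
        rw [show 2 * (q + 1) = (2 * q + 1) + 1 by ring, Nat.factorial_succ, Nat.factorial_succ]
      rw [e3, show 2 * (q + 1) = 2 * q + 2 by ring, pow_succ (2:ℝ) q, pow_add σ]
      push_cast
      rw [← h2]
      field_simp
      ring
end AN

section FN
open Topology

lemma moment_tendsto (P : Set ℕ) (hP : ∀ n ∈ P, 2 ≤ n) (hP2 : P.Nontrivial)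
    (ρ : ℝ) (hρ0 : 0 < ρ) (hρκ : kappa P < (ρ : EReal)) (hρ1 : Pval P ρ = 1)
    (μ σ : ℝ) (hμ : μ = -1 / Pderiv1 P ρ)
    (hσ : σ ^ 2 = μ ^ 3 * Pderiv2 P ρ - μ)
    (hnp : ∀ d : ℕ, 2 ≤ d → ¬ P ⊆ {n : ℕ | ∃ k : ℕ, 1 ≤ k ∧ n = d ^ k}) :
    0 < μ ∧ σ ^ 2 ≠ 0 ∧ ∀ p : ℕ, Tendsto (fun N : ℕ => (∑ n ∈ Finset.Icc 1 N, bCoef P μ (2 * p) n) / ((N : ℝ) ^ ρ * (Real.log N) ^ p)) atTop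
      (𝓝 ((μ * σ ^ (2 * p) * (2 * p).factorial / 2 ^ p) / ρ / p.factorial)) := by
  obtain ⟨r, hrρ, hr⟩ := exists_r P ρ hρκ
  obtain ⟨hμ0, hσ0, e0, e1, e2, ed⟩ := vals P hP hP2 r ρ hrρ hr hρ1 μ σ hμ hσ
  refine ⟨hμ0, hσ0, fun p => ?_⟩
  obtain ⟨V, hVo, hVs, hR⟩ := analytic_ind r ρ μ σ hrρ hμ0.ne' (fun i => LSeries (fun n => (fP P μ i n : ℂ)))
    (fun k => LSeries (fun n => (bCoef P μ k n : ℂ))) (fun i => fP_diff P hP r hr μ i)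
    (fun k s hs => b_feq P hP hP2 r ρ hrρ hr hρ1 μ hμ0.le k s hs) e0 e1 e2 ed
    (fun s hs hne => nonvanish P hP hP2 r ρ hrρ hr μ e0 hnp s hs hne)
  obtain ⟨R, dR, eR, vR⟩ := hR (2 * p)
  have hVn : V ∈ 𝓝 (ρ : ℂ) := hVo.mem_nhds (hVs (by simp))
  have dG := (Complex.differentiableOn_dslope hVn).mpr dR
  apply taub_dir (fun n => bCoef P μ (2 * p) n) (fun n => bCoef_nonneg_even P μ _ n (even_two_mul p)) ρ hρ0
    (fun s hs => b_LSS P hP hP2 r ρ hrρ hr hρ1 μ hμ0.le _ s hs) _ p (dslope R ρ) (dG.continuousOn.mono hVs)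
  intro s hs
  have hw : s - ρ ≠ 0 := by
    intro h
    have := congrArg Complex.re h
    simp at this; linarith
  have h1 := eR s hs
  have h2 := sub_smul_dslope R (ρ : ℂ) s
  rw [vR p rfl, smul_eq_mul] at h2
  have h3 : 2 * p / 2 = p := by omega
  rw [h3] at h1
  rw [h1]
  rw [show R s = (s - ρ) * dslope R ρ s + ((μ * σ ^ (2 * p) * (2 * p).factorial / 2 ^ p : ℝ) : ℂ) by rw [h2]; ring]
  generalize ((μ * σ ^ (2 * p) * (2 * p).factorial / 2 ^ p : ℝ) : ℂ) = c
  rw [pow_succ]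
  field_simp
  ring

end FN

/-- **Even central moments relative to `μ log ν_N`.** Under the stated assumptions,
including non-periodicity, for every even `k ≥ 0`,
`(1/A(N)) Σ_{n ≤ N} b_k(n) ∼ (k!/(2^{k/2} (k/2)!)) σ^k (log N)^{k/2}`. -/
theorem even_moment_asymptotic
    (P : Set ℕ) (hP : ∀ n ∈ P, 2 ≤ n) (hP2 : P.Nontrivial)
    (hκ : 1 < PvalE P (kappa P))
    (ρ : ℝ) (hρ0 : 0 < ρ) (hρκ : kappa P < (ρ : EReal)) (hρ1 : Pval P ρ = 1)
    (μ σ : ℝ) (hμ : μ = -1 / Pderiv1 P ρ)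
    (hσ0 : 0 ≤ σ) (hσ : σ ^ 2 = μ ^ 3 * Pderiv2 P ρ - μ)
    (hnp : ∀ d : ℕ, 2 ≤ d → ¬ P ⊆ {n : ℕ | ∃ k : ℕ, 1 ≤ k ∧ n = d ^ k})
    (k : ℕ) (hk : Even k) :
    Asymptotics.IsEquivalent atTop
      (fun N : ℕ => (∑ n ∈ Finset.Icc 1 N, bCoef P μ k n) / Acum P N)
      (fun N : ℕ =>
        (Nat.factorial k : ℝ) / (2 ^ (k / 2) * Nat.factorial (k / 2))
          * σ ^ k * (Real.log N) ^ (k / 2)) := by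
  obtain ⟨p, hp⟩ := hk.two_dvd
  subst hp
  obtain ⟨hμ0, hσ1, T⟩ := moment_tendsto P hP hP2 ρ hρ0 hρκ hρ1 μ σ hμ hσ hnp
  have hs0 : σ ≠ 0 := by rintro rfl; simp at hσ1
  have T0 := T 0
  have Tp := T p
  have hA : ∀ N, Acum P N = ∑ n ∈ Finset.Icc 1 N, bCoef P μ (2 * 0) n := by
    intro N
    exact Finset.sum_congr rfl (fun n _ => aTot_eq P μ n)
  rw [show 2 * p / 2 = p by omega]
  set K : ℝ := (Nat.factorial (2 * p) : ℝ) / (2 ^ p * Nat.factorial p) * σ ^ (2 * p) with hK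
  have hK0 : K ≠ 0 := by positivity
  have hc0 : (μ * σ ^ (2 * 0) * (2 * 0).factorial / 2 ^ 0) / ρ / (Nat.factorial 0 : ℝ) ≠ 0 := by
    simp; exact ⟨hμ0.ne', hρ0.ne'⟩
  have Q := (Tp.div T0 hc0).div_const K
  have e : (μ * σ ^ (2 * p) * (2 * p).factorial / 2 ^ p) / ρ / (p.factorial : ℝ) / ((μ * σ ^ (2 * 0) * (2 * 0).factorial / 2 ^ 0) / ρ / (Nat.factorial 0 : ℝ)) / K = 1 := by
    rw [hK]
    have : (p.factorial : ℝ) ≠ 0 := by positivity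
    have : ((2 * p).factorial : ℝ) ≠ 0 := by positivity
    simp
    field_simp
  rw [e] at Q
  apply isEquivalent_of_tendsto_one
  refine Q.congr' ?_
  filter_upwards [eventually_ge_atTop 2] with N hN
  have hN' : (0:ℝ) < (N:ℝ) ^ ρ := by positivity
  have hl : 0 < Real.log N := Real.log_pos (by exact_mod_cast hN)
  simp only [Pi.div_apply, hA, pow_zero, mul_one]
  generalize ∑ n ∈ Finset.Icc 1 N, bCoef P μ (2 * 0) n = x
  generalize ∑ n ∈ Finset.Icc 1 N, bCoef P μ (2 * p) n = y
  by_cases hx : x = 0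
  · simp [hx]
  · field_simp
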